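/- arXiv:math/0401229 — 2 statements merged into one kernel-verified Lean document; each statement's English description precedes it below -/
import Mathlib

section
/- Let N be a positive integer and let x_1,…,x_N and y_1,…,y_N be real numbers in [0,1). Then the family (s_λ(x_1,…,x_N)·s_λ(y_1,…,y_N)), indexed by all Young diagrams λ with at most N rows, is summable, and its sum equals ∏_{i=1}^N ∏_{j=1}^N 1/(1 − x_i y_j) (Cauchy identity). -/
/-- A semistandard Young tableau of shape `lam` (a Young diagram with at most `N` rows,
given as a nonincreasing function `Fin N → ℕ`), with entries in `Fin N` (representing
the integers `1, …, N`).  `entry i j` is the entry in row `i` and column `j` (0-indexed);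
rows are weakly increasing, columns are strictly increasing, and entries outside of the
shape are normalized to `0`. -/
structure SSYT (N : ℕ) (lam : Fin N → ℕ) where
  entry : Fin N → ℕ → Fin N
  rowWeak : ∀ (i : Fin N) (j1 j2 : ℕ), j1 ≤ j2 → j2 < lam i → entry i j1 ≤ entry i j2
  colStrict : ∀ (i1 i2 : Fin N), i1 < i2 → ∀ j : ℕ, j < lam i2 → entry i1 j < entry i2 j
  zeroOutside : ∀ (i : Fin N) (j : ℕ), lam i ≤ j → (entry i j : ℕ) = 0

/-- The content of a semistandard Young tableau: `content T k` is the number of cells of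
`T` whose entry equals `k`. -/
noncomputable def SSYT.content {N : ℕ} {lam : Fin N → ℕ} (T : SSYT N lam) (k : Fin N) : ℕ :=
  ∑ i : Fin N, ((Finset.range (lam i)).filter (fun j => T.entry i j = k)).card

/-- The Schur polynomial `s_lam (x 0, …, x (N-1))`, defined as the sum over all semistandard
Young tableaux `T` of shape `lam` with entries in `{1, …, N}` of the monomial
`∏ k, (x k) ^ (number of entries of T equal to k)`. -/
noncomputable def schur {R : Type*} [CommRing R] [TopologicalSpace R] (N : ℕ)
    (lam : Fin N → ℕ) (x : Fin N → R) : R :=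
  ∑' T : SSYT N lam, ∏ k : Fin N, x k ^ T.content k

/-! Work first with values in `[0, ∞]`, where sums may be exchanged freely. Stripping the cells with
the largest entry off a tableau leaves a smaller tableau and a horizontal strip, so a Schur
polynomial is obtained by applying the operators `f ↦ ∑_μ s_{λ/μ}(x) f(μ)`, one for each variable.
The operator for `x` and the adjoint of the operator for `y` commute up to the factor
`(1 - x y)⁻¹`: the diagrams obtained from both `μ` and `ν` by adding a horizontal strip are matched
with a natural number and a diagram obtained from both by removing one, by reflecting each row
length in an interval. Moving all the adjoints past all the operators produces the product. -/

open Finset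
open scoped ENNReal

/-- The skew diagram `la / mu` is a horizontal strip, that is, it has at most one cell in each
column; equivalently the sequences interlace, `la 0 ≥ mu 0 ≥ la 1 ≥ mu 1 ≥ ⋯`. -/
def IsHorizontalStrip {N : ℕ} (mu la : Fin N → ℕ) : Prop :=
  (∀ i, mu i ≤ la i) ∧ ∀ ⦃i j⦄, i < j → la j ≤ mu i

namespace IsHorizontalStrip

variable {N : ℕ} {mu la : Fin N → ℕ}

lemma antitone_left (h : IsHorizontalStrip mu la) : Antitone mu :=
  antitone_iff_forall_lt.2 fun _ j hij => (h.1 j).trans (h.2 hij)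

lemma antitone_right (h : IsHorizontalStrip mu la) : Antitone la :=
  antitone_iff_forall_lt.2 fun i _ hij => (h.2 hij).trans (h.1 i)

lemma sum_le (h : IsHorizontalStrip mu la) : ∑ i, mu i ≤ ∑ i, la i :=
  sum_le_sum fun i _ => h.1 i

end IsHorizontalStrip

lemma isHorizontalStrip_zero_right {N : ℕ} {mu : Fin N → ℕ} :
    IsHorizontalStrip mu 0 ↔ mu = 0 := by
  refine ⟨fun h => funext fun i => Nat.le_zero.1 (h.1 i), ?_⟩
  rintro rfl
  exact ⟨fun _ => le_rfl, fun _ _ _ => le_rfl⟩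

lemma isHorizontalStrip_iff_succ_le {n : ℕ} {mu la : Fin (n + 1) → ℕ} :
    IsHorizontalStrip mu la ↔
      (∀ i, mu i ≤ la i) ∧ ∀ i : Fin n, la i.succ ≤ mu i.castSucc := by
  refine ⟨fun h => ⟨h.1, fun i => h.2 i.castSucc_lt_succ⟩, fun ⟨hle, hsucc⟩ => ⟨hle, ?_⟩⟩
  have hmu : Antitone mu := Fin.antitone_iff_succ_le.2 fun i => (hle _).trans (hsucc i)
  intro i j hij
  obtain ⟨j, rfl⟩ := Fin.exists_succ_eq.2 (Fin.ne_zero_of_lt hij)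
  exact (hsucc j).trans (hmu (Fin.le_castSucc_iff.2 hij))

section LocalGrowth

variable {n : ℕ} {mu nu : Fin (n + 1) → ℕ}

lemma isHorizontalStrip_and_iff_above {la : Fin (n + 1) → ℕ} :
    IsHorizontalStrip mu la ∧ IsHorizontalStrip nu la ↔
      max (mu 0) (nu 0) ≤ la 0 ∧ ∀ i : Fin n,
        max (mu i.succ) (nu i.succ) ≤ la i.succ ∧
        la i.succ ≤ min (mu i.castSucc) (nu i.castSucc) := by
  simp only [isHorizontalStrip_iff_succ_le, Fin.forall_fin_succ (n := n), max_le_iff, le_min_iff,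
    forall_and]
  tauto

lemma isHorizontalStrip_and_iff_below {ka : Fin (n + 1) → ℕ} :
    IsHorizontalStrip ka mu ∧ IsHorizontalStrip ka nu ↔
      ka (Fin.last n) ≤ min (mu (Fin.last n)) (nu (Fin.last n)) ∧ ∀ i : Fin n,
        max (mu i.succ) (nu i.succ) ≤ ka i.castSucc ∧
        ka i.castSucc ≤ min (mu i.castSucc) (nu i.castSucc) := by
  simp only [isHorizontalStrip_iff_succ_le, Fin.forall_fin_succ' (n := n), max_le_iff, le_min_iff,
    forall_and]
  tauto

/-- Fomin's local growth rule. The row `i + 1` of a diagram above both `mu` and `nu` ranges over the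
same interval as the row `i` of a diagram below both; reflecting these intervals pairs the two kinds
of diagrams up to the unconstrained first row of the upper one, which is recorded by the natural
number. The condition `hnu` pins the last row of the lower diagram to `0`. -/
def growthEquiv (hnu : nu (Fin.last n) = 0) :
    ℕ × {ka // IsHorizontalStrip ka mu ∧ IsHorizontalStrip ka nu} ≃
      {la // IsHorizontalStrip mu la ∧ IsHorizontalStrip nu la} where
  toFun p :=
    ⟨Fin.cons (max (mu 0) (nu 0) + p.1) fun i => max (mu i.succ) (nu i.succ) +
        min (mu i.castSucc) (nu i.castSucc) - p.2.1 i.castSucc, by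
      have hka := isHorizontalStrip_and_iff_below.1 p.2.2
      refine isHorizontalStrip_and_iff_above.2 ⟨Nat.le_add_right _ _, fun i => ?_⟩
      have := hka.2 i
      simp only [Fin.cons_succ]
      omega⟩
  invFun la :=
    ⟨la.1 0 - max (mu 0) (nu 0), Fin.snoc (α := fun _ => ℕ) (fun i => max (mu i.succ) (nu i.succ) +
        min (mu i.castSucc) (nu i.castSucc) - la.1 i.succ) 0, by
      have hla := isHorizontalStrip_and_iff_above.1 la.2
      refine isHorizontalStrip_and_iff_below.2 ⟨by simp, fun i => ?_⟩
      have := hla.2 i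
      simp only [Fin.snoc_castSucc]
      omega⟩
  left_inv := by
    rintro ⟨t, ka, hka⟩
    rw [isHorizontalStrip_and_iff_below] at hka
    refine Prod.ext (by simp) (Subtype.ext (funext (Fin.lastCases ?_ fun i => ?_)))
    · simp only [Fin.snoc_last]
      omega
    · have := hka.2 i
      simp only [Fin.cons_succ, Fin.snoc_castSucc]
      omega
  right_inv := by
    rintro ⟨la, hla⟩
    rw [isHorizontalStrip_and_iff_above] at hla
    refine Subtype.ext (funext (Fin.cases ?_ fun i => ?_))
    · simp only [Fin.cons_zero]
      omega
    · have := hla.2 i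
      simp only [Fin.cons_succ, Fin.snoc_castSucc]
      omega

lemma growthEquiv_apply_zero (hnu : nu (Fin.last n) = 0)
    (p : ℕ × {ka // IsHorizontalStrip ka mu ∧ IsHorizontalStrip ka nu}) :
    (growthEquiv hnu p).1 0 = max (mu 0) (nu 0) + p.1 :=
  rfl

lemma growthEquiv_apply_succ_add (hnu : nu (Fin.last n) = 0)
    (p : ℕ × {ka // IsHorizontalStrip ka mu ∧ IsHorizontalStrip ka nu}) (i : Fin n) :
    (growthEquiv hnu p).1 i.succ + p.2.1 i.castSucc =
      max (mu i.succ) (nu i.succ) + min (mu i.castSucc) (nu i.castSucc) :=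
  Nat.sub_add_cancel <|
    ((isHorizontalStrip_and_iff_below.1 p.2.2).2 i).2.trans (Nat.le_add_left _ _)

lemma sum_growthEquiv_add_sum (hnu : nu (Fin.last n) = 0)
    (p : ℕ × {ka // IsHorizontalStrip ka mu ∧ IsHorizontalStrip ka nu}) :
    ∑ i, (growthEquiv hnu p).1 i + ∑ i, p.2.1 i = p.1 + ∑ i, mu i + ∑ i, nu i := by
  have hlast : p.2.1 (Fin.last n) = 0 := Nat.le_zero.1 ((p.2.2.2.1 _).trans_eq hnu)
  calc ∑ i, (growthEquiv hnu p).1 i + ∑ i, p.2.1 i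
      = max (mu 0) (nu 0) + p.1 +
          ∑ i : Fin n, ((growthEquiv hnu p).1 i.succ + p.2.1 i.castSucc) := by
        rw [Fin.sum_univ_succ, Fin.sum_univ_castSucc p.2.1, hlast, growthEquiv_apply_zero,
          sum_add_distrib, add_zero, add_assoc]
    _ = p.1 + (max (mu 0) (nu 0) + ∑ i : Fin n, max (mu i.succ) (nu i.succ)) +
          ∑ i : Fin n, min (mu i.castSucc) (nu i.castSucc) := by
        simp only [growthEquiv_apply_succ_add, sum_add_distrib]
        ring
    _ = p.1 + ∑ i, max (mu i) (nu i) + ∑ i, min (mu i) (nu i) := by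
        rw [Fin.sum_univ_succ fun i => max (mu i) (nu i),
          Fin.sum_univ_castSucc fun i => min (mu i) (nu i), hnu, Nat.min_zero, add_zero]
    _ = p.1 + ∑ i, mu i + ∑ i, nu i := by
        simp only [add_assoc, ← sum_add_distrib, max_add_min]

end LocalGrowth

open Classical in
/-- The skew Schur polynomial `s_{la/mu}(x)` in a single variable. -/
noncomputable def skewSchurOne {R : Type*} [Semiring R] {N : ℕ} (x : R) (mu la : Fin N → ℕ) : R :=
  if IsHorizontalStrip mu la then x ^ (∑ i, la i - ∑ i, mu i) else 0

section SkewSchurOne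

variable {R : Type*} [Semiring R] {N : ℕ} {mu la : Fin N → ℕ} {x : R}

lemma skewSchurOne_of_strip (h : IsHorizontalStrip mu la) :
    skewSchurOne x mu la = x ^ (∑ i, la i - ∑ i, mu i) :=
  if_pos h

lemma isHorizontalStrip_of_skewSchurOne_ne_zero (h : skewSchurOne x mu la ≠ 0) :
    IsHorizontalStrip mu la :=
  of_not_not fun hs => h (if_neg hs)

lemma skewSchurOne_zero_right : skewSchurOne x mu 0 = if mu = 0 then 1 else 0 := by
  simp [skewSchurOne, isHorizontalStrip_zero_right]

end SkewSchurOne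

lemma skewSchurOne_mul_growthEquiv {R : Type*} [CommSemiring R] {n : ℕ}
    {mu nu : Fin (n + 1) → ℕ} (x y : R) (hnu : nu (Fin.last n) = 0)
    (p : ℕ × {ka // IsHorizontalStrip ka mu ∧ IsHorizontalStrip ka nu}) :
    skewSchurOne y mu (growthEquiv hnu p).1 * skewSchurOne x nu (growthEquiv hnu p).1 =
      (x * y) ^ p.1 * (skewSchurOne x p.2.1 mu * skewSchurOne y p.2.1 nu) := by
  obtain ⟨hmu_la, hnu_la⟩ := (growthEquiv hnu p).2
  obtain ⟨hka_mu, hka_nu⟩ := p.2.2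
  have hsize := sum_growthEquiv_add_sum hnu p
  rw [skewSchurOne_of_strip hmu_la, skewSchurOne_of_strip hnu_la, skewSchurOne_of_strip hka_mu,
    skewSchurOne_of_strip hka_nu]
  have := hka_mu.sum_le
  have := hka_nu.sum_le
  rw [show ∑ i, (growthEquiv hnu p).1 i - ∑ i, mu i = p.1 + (∑ i, nu i - ∑ i, p.2.1 i) by omega,
    show ∑ i, (growthEquiv hnu p).1 i - ∑ i, nu i = p.1 + (∑ i, mu i - ∑ i, p.2.1 i) by omega]
  ring

lemma tsum_skewSchurOne_mul_skewSchurOne {n : ℕ} {mu nu : Fin (n + 1) → ℕ} (x y : ℝ≥0∞)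
    (hnu : nu (Fin.last n) = 0) :
    ∑' la, skewSchurOne y mu la * skewSchurOne x nu la =
      (1 - x * y)⁻¹ * ∑' ka, skewSchurOne x ka mu * skewSchurOne y ka nu := by
  have above : Function.support (fun la => skewSchurOne y mu la * skewSchurOne x nu la) ⊆
      {la | IsHorizontalStrip mu la ∧ IsHorizontalStrip nu la} := fun la hla =>
    ⟨isHorizontalStrip_of_skewSchurOne_ne_zero (left_ne_zero_of_mul hla),
      isHorizontalStrip_of_skewSchurOne_ne_zero (right_ne_zero_of_mul hla)⟩
  have below : Function.support (fun ka => skewSchurOne x ka mu * skewSchurOne y ka nu) ⊆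
      {ka | IsHorizontalStrip ka mu ∧ IsHorizontalStrip ka nu} := fun ka hka =>
    ⟨isHorizontalStrip_of_skewSchurOne_ne_zero (left_ne_zero_of_mul hka),
      isHorizontalStrip_of_skewSchurOne_ne_zero (right_ne_zero_of_mul hka)⟩
  rw [← tsum_subtype_eq_of_support_subset above, ← tsum_subtype_eq_of_support_subset below,
    ← ENNReal.tsum_geometric, ← ENNReal.tsum_mul_right]
  refine ((growthEquiv hnu).tsum_eq _).symm.trans ?_
  simp only [skewSchurOne_mul_growthEquiv]
  rw [ENNReal.tsum_prod']
  simp only [ENNReal.tsum_mul_left]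
  rfl

/-- The Schur polynomial `s_la (x 0, …, x (k - 1))` with values in `[0, ∞]`, built by adding one
variable at a time. The number `k` of variables is independent of the bound `N` on the number of
rows. -/
noncomputable def eschur {N : ℕ} : {k : ℕ} → (Fin k → ℝ≥0∞) → (Fin N → ℕ) → ℝ≥0∞
  | 0, _, la => if la = 0 then 1 else 0
  | k + 1, x, la => ∑' mu, skewSchurOne (x (Fin.last k)) mu la * eschur (Fin.init x) mu

section Eschur

variable {N k : ℕ}

lemma exists_strip_of_eschur_ne_zero {x : Fin (k + 1) → ℝ≥0∞} {la : Fin N → ℕ}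
    (h : eschur x la ≠ 0) : ∃ mu, IsHorizontalStrip mu la ∧ eschur (Fin.init x) mu ≠ 0 := by
  simp only [eschur, ne_eq, ENNReal.tsum_eq_zero, not_forall] at h
  obtain ⟨mu, hmu⟩ := h
  exact ⟨mu, isHorizontalStrip_of_skewSchurOne_ne_zero (left_ne_zero_of_mul hmu),
    right_ne_zero_of_mul hmu⟩

lemma row_eq_zero_of_eschur_ne_zero {x : Fin k → ℝ≥0∞} {la : Fin N → ℕ} (h : eschur x la ≠ 0)
    {i : Fin N} (hi : k ≤ i) : la i = 0 := by
  induction k generalizing la i with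
  | zero =>
    have hla : la = 0 := of_not_not fun hla => h (if_neg hla)
    rw [hla, Pi.zero_apply]
  | succ k ih =>
    obtain ⟨mu, hmu, hne⟩ := exists_strip_of_eschur_ne_zero h
    let j : Fin N := ⟨k, by omega⟩
    exact Nat.le_zero.1 ((hmu.2 (show j < i from hi)).trans (ih hne le_rfl).le)

lemma antitone_of_eschur_ne_zero {x : Fin k → ℝ≥0∞} {la : Fin N → ℕ} (h : eschur x la ≠ 0) :
    Antitone la := by
  cases k with
  | zero =>
    have hla : la = 0 := of_not_not fun hla => h (if_neg hla)
    rw [hla]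
    exact antitone_const
  | succ k =>
    obtain ⟨mu, hmu, -⟩ := exists_strip_of_eschur_ne_zero h
    exact hmu.antitone_right

lemma eschur_zero_right (x : Fin k → ℝ≥0∞) : eschur x (0 : Fin N → ℕ) = 1 := by
  induction k with
  | zero => simp [eschur]
  | succ k ih => simp [eschur, skewSchurOne_zero_right, ih]

lemma tsum_skewSchurOne_mul_eschur (hk : k ≤ N) (x : Fin k → ℝ≥0∞) (y : ℝ≥0∞)
    (mu : Fin N → ℕ) :
    ∑' la, skewSchurOne y mu la * eschur x la = (∏ i, (1 - x i * y)⁻¹) * eschur x mu := by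
  induction k generalizing mu with
  | zero => simp [eschur, skewSchurOne_zero_right]
  | succ k ih =>
    obtain ⟨n, rfl⟩ : ∃ n, N = n + 1 := ⟨N - 1, by omega⟩
    set z := x (Fin.last k)
    have commute : ∀ nu, ∑' la, skewSchurOne y mu la * skewSchurOne z nu la * eschur (Fin.init x) nu
        = (1 - z * y)⁻¹ *
          ∑' ka, skewSchurOne z ka mu * (skewSchurOne y ka nu * eschur (Fin.init x) nu) := by
      intro nu
      by_cases hnu : eschur (Fin.init x) nu = 0
      · simp [hnu]
      · have hlast : nu (Fin.last n) = 0 :=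
          row_eq_zero_of_eschur_ne_zero hnu (Nat.le_of_succ_le_succ hk)
        simp only [← mul_assoc, ENNReal.tsum_mul_right,
          tsum_skewSchurOne_mul_skewSchurOne z y hlast]
    calc ∑' la, skewSchurOne y mu la * eschur x la
        = ∑' nu, ∑' la, skewSchurOne y mu la * skewSchurOne z nu la * eschur (Fin.init x) nu := by
          rw [ENNReal.tsum_comm]
          simp only [eschur, ← ENNReal.tsum_mul_left, mul_assoc, z]
      _ = (1 - z * y)⁻¹ * ∑' ka, skewSchurOne z ka mu *
            ∑' nu, skewSchurOne y ka nu * eschur (Fin.init x) nu := by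
          simp only [commute, ENNReal.tsum_mul_left]
          rw [ENNReal.tsum_comm]
          simp only [ENNReal.tsum_mul_left]
      _ = (1 - z * y)⁻¹ * ((∏ i, (1 - Fin.init x i * y)⁻¹) * eschur x mu) := by
          simp only [ih (by omega), mul_left_comm _ (∏ i, (1 - Fin.init x i * y)⁻¹),
            ENNReal.tsum_mul_left, eschur, z]
      _ = (∏ i, (1 - x i * y)⁻¹) * eschur x mu := by
          rw [Fin.prod_univ_castSucc]
          simp only [Fin.init, z]
          ring

theorem tsum_eschur_mul_eschur {l : ℕ} (hk : k ≤ N) (x : Fin k → ℝ≥0∞) (y : Fin l → ℝ≥0∞) :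
    ∑' la : Fin N → ℕ, eschur x la * eschur y la = ∏ i, ∏ j, (1 - x i * y j)⁻¹ := by
  rw [prod_comm]
  induction l with
  | zero => simp [eschur, eschur_zero_right]
  | succ l ih =>
    set z := y (Fin.last l)
    calc ∑' la : Fin N → ℕ, eschur x la * eschur y la
        = ∑' mu : Fin N → ℕ, eschur (Fin.init y) mu *
            ∑' la, skewSchurOne z mu la * eschur x la := by
          simp only [eschur, ← ENNReal.tsum_mul_left, z]
          rw [ENNReal.tsum_comm]
          exact tsum_congr fun mu => tsum_congr fun la => by ring
      _ = (∏ i, (1 - x i * z)⁻¹) * ∑' mu : Fin N → ℕ, eschur x mu * eschur (Fin.init y) mu := by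
          rw [← ENNReal.tsum_mul_left]
          refine tsum_congr fun mu => ?_
          rw [tsum_skewSchurOne_mul_eschur hk]
          ring
      _ = ∏ j, ∏ i, (1 - x i * y j)⁻¹ := by
          rw [ih, Fin.prod_univ_castSucc, mul_comm]
          rfl

end Eschur

namespace SSYT

variable {N : ℕ} {mu la : Fin N → ℕ}

lemma ext_of_lt {T T' : SSYT N la} (h : ∀ i j, j < la i → T.entry i j = T'.entry i j) :
    T = T' := by
  have hentry : T.entry = T'.entry := by
    funext i j
    by_cases hj : j < la i
    · exact h i j hj
    · rw [not_lt] at hj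
      exact Fin.ext ((T.zeroOutside i j hj).trans (T'.zeroOutside i j hj).symm)
  cases T
  cases T'
  cases hentry
  rfl

lemma prod_pow_content {M : Type*} [CommMonoid M] (T : SSYT N la) (x : Fin N → M) :
    ∏ k, x k ^ T.content k = ∏ i, ∏ j ∈ range (la i), x (T.entry i j) := by
  simp only [content, ← prod_pow_eq_pow_sum]
  rw [prod_comm]
  refine prod_congr rfl fun i _ => ?_
  rw [← prod_fiberwise' (range (la i)) (T.entry i) x]
  simp only [prod_const]

/-- The tableau only uses the first `k` letters, which are `0, …, k - 1` here. -/
def EntriesLT (T : SSYT N la) (k : ℕ) : Prop :=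
  ∀ i j, j < la i → (T.entry i j : ℕ) < k

section Extend

variable {k : Fin N}

/-- The tableau of shape `la` obtained from `T` by filling the horizontal strip `la / mu` with the
letter `k`. -/
def extend (T : SSYT N mu) (hT : T.EntriesLT k) (h : IsHorizontalStrip mu la) : SSYT N la where
  entry i j := if j < mu i then T.entry i j else if j < la i then k else ⟨0, i.pos⟩
  rowWeak i j₁ j₂ hj hj₂ := by
    rw [if_pos (hj.trans_lt hj₂), if_pos hj₂]
    split_ifs with h₁ h₂ h₂
    · exact T.rowWeak i j₁ j₂ hj h₂
    · exact (hT i j₁ h₁).le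
    · exact absurd (hj.trans_lt h₂) h₁
    · exact le_rfl
  colStrict i₁ i₂ hi j hj := by
    rw [if_pos (hj.trans_le (h.2 hi)), if_pos hj]
    split_ifs with h₂
    · exact T.colStrict i₁ i₂ hi j h₂
    · exact hT i₁ j (hj.trans_le (h.2 hi))
  zeroOutside i j hj := by
    rw [if_neg ((h.1 i).trans hj).not_gt, if_neg hj.not_gt]

variable {T : SSYT N mu} {hT : T.EntriesLT k} {h : IsHorizontalStrip mu la} {i : Fin N} {j : ℕ}

lemma extend_entry_of_lt (hj : j < mu i) : (T.extend hT h).entry i j = T.entry i j :=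
  if_pos hj

lemma extend_entry_of_le_of_lt (hj : mu i ≤ j) (hj' : j < la i) :
    (T.extend hT h).entry i j = k :=
  (if_neg hj.not_gt).trans (if_pos hj')

lemma extend_entry_lt_iff (hj : j < la i) : (T.extend hT h).entry i j < k ↔ j < mu i := by
  rcases lt_or_ge j (mu i) with hj' | hj'
  · simp only [extend_entry_of_lt hj', hj', iff_true]
    exact hT i j hj'
  · simp only [extend_entry_of_le_of_lt hj' hj, lt_irrefl, hj'.not_gt]

lemma entriesLT_extend : (T.extend hT h).EntriesLT (k + 1) := by
  intro i j hj
  rcases lt_or_ge j (mu i) with hj' | hj'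
  · rw [extend_entry_of_lt hj']
    exact Nat.lt_succ_of_lt (hT i j hj')
  · rw [extend_entry_of_le_of_lt hj' hj]
    exact Nat.lt_succ_self k

lemma prod_pow_content_extend {M : Type*} [CommMonoid M] (x : Fin N → M)
    (T : SSYT N mu) (hT : T.EntriesLT k) (h : IsHorizontalStrip mu la) :
    ∏ m, x m ^ (T.extend hT h).content m =
      x k ^ (∑ i, la i - ∑ i, mu i) * ∏ m, x m ^ T.content m := by
  have hrow : ∀ i, ∏ j ∈ range (la i), x ((T.extend hT h).entry i j) =
      x k ^ (la i - mu i) * ∏ j ∈ range (mu i), x (T.entry i j) := by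
    intro i
    rw [← prod_range_mul_prod_Ico _ (h.1 i), mul_comm]
    congr 1
    · rw [prod_congr rfl fun j hj => congrArg x
        (extend_entry_of_le_of_lt (mem_Ico.1 hj).1 (mem_Ico.1 hj).2), prod_const, Nat.card_Ico]
    · exact prod_congr rfl fun j hj => congrArg x (extend_entry_of_lt (mem_range.1 hj))
  simp only [prod_pow_content, hrow, prod_mul_distrib, prod_pow_eq_pow_sum]
  rw [sum_tsub_distrib _ fun i _ => h.1 i]

end Extend

section Restrict

variable (T : SSYT N la) (k : ℕ)

/-- The shape formed by the cells with entry less than `k`: in row `i` these are the cells before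
the first column which lies outside `la` or has an entry at least `k`. -/
def subshape (i : Fin N) : ℕ :=
  Nat.find (p := fun j => la i ≤ j ∨ k ≤ T.entry i j) ⟨la i, Or.inl le_rfl⟩

variable {T k}

lemma lt_subshape_iff {i : Fin N} {j : ℕ} :
    j < T.subshape k i ↔ j < la i ∧ (T.entry i j : ℕ) < k := by
  simp only [subshape, Nat.lt_find_iff, not_or, not_le]
  refine ⟨fun h => h j le_rfl, fun ⟨hj, hk⟩ m hm => ⟨hm.trans_lt hj, ?_⟩⟩
  exact lt_of_le_of_lt (T.rowWeak i m j hm hj) hk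

lemma isHorizontalStrip_subshape (hla : Antitone la) (hT : T.EntriesLT (k + 1)) :
    IsHorizontalStrip (T.subshape k) la := by
  refine ⟨fun i => le_of_forall_lt fun j hj => (lt_subshape_iff.1 hj).1, fun i₁ i₂ hi => ?_⟩
  refine le_of_forall_lt fun j hj => lt_subshape_iff.2 ⟨hj.trans_le (hla hi.le), ?_⟩
  exact lt_of_lt_of_le (T.colStrict i₁ i₂ hi j hj) (Nat.lt_succ_iff.1 (hT i₂ j hj))

/-- The tableau formed by the cells of `T` with entry less than `k`. -/
def restrict (T : SSYT N la) (hla : Antitone la) (k : ℕ) : SSYT N (T.subshape k) where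
  entry i j := if j < T.subshape k i then T.entry i j else ⟨0, i.pos⟩
  rowWeak i j₁ j₂ hj hj₂ := by
    rw [if_pos (hj.trans_lt hj₂), if_pos hj₂]
    exact T.rowWeak i j₁ j₂ hj (lt_subshape_iff.1 hj₂).1
  colStrict i₁ i₂ hi j hj := by
    obtain ⟨hj', hk⟩ := lt_subshape_iff.1 hj
    have hlt := T.colStrict i₁ i₂ hi j hj'
    rwa [if_pos (lt_subshape_iff.2 ⟨hj'.trans_le (hla hi.le), lt_trans hlt hk⟩), if_pos hj]
  zeroOutside i j hj := by
    rw [if_neg hj.not_gt]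

lemma restrict_entry_of_lt {hla : Antitone la} {i : Fin N} {j : ℕ} (hj : j < T.subshape k i) :
    (T.restrict hla k).entry i j = T.entry i j :=
  if_pos hj

lemma entriesLT_restrict (hla : Antitone la) : (T.restrict hla k).EntriesLT k := fun i j hj => by
  rw [restrict_entry_of_lt hj]
  exact (lt_subshape_iff.1 hj).2

end Restrict

/-- Removing the cells with entry `k` from a tableau with entries at most `k` leaves a tableau with
entries less than `k`, and the removed cells form a horizontal strip. -/
noncomputable def branchingEquiv (hla : Antitone la) (k : Fin N) :
    (Σ mu : {mu // IsHorizontalStrip mu la}, {T : SSYT N mu.1 // T.EntriesLT k}) ≃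
      {T : SSYT N la // T.EntriesLT (k + 1)} :=
  Equiv.ofBijective (fun p => ⟨p.2.1.extend p.2.2 p.1.2, entriesLT_extend⟩) <| by
    constructor
    · rintro ⟨⟨mu, hmu⟩, T, hT⟩ ⟨⟨mu', hmu'⟩, T', hT'⟩ heq
      have hext : T.extend hT hmu = T'.extend hT' hmu' := congrArg Subtype.val heq
      have hshape : mu = mu' := funext fun i => eq_of_forall_lt_iff fun j => by
        by_cases hj : j < la i
        · rw [← extend_entry_lt_iff (hT := hT) (h := hmu) hj, hext, extend_entry_lt_iff hj]
        · have := hmu.1 i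
          have := hmu'.1 i
          omega
      subst hshape
      have hT : T = T' := ext_of_lt fun i j hj => by
        rw [← extend_entry_of_lt (hT := hT) (h := hmu) hj, hext, extend_entry_of_lt hj]
      subst hT
      rfl
    · rintro ⟨T, hT⟩
      refine ⟨⟨⟨_, isHorizontalStrip_subshape hla hT⟩, _, entriesLT_restrict hla⟩,
        Subtype.ext (ext_of_lt fun i j hj => ?_)⟩
      rcases lt_or_ge j (T.subshape k i) with hj' | hj'
      · rw [extend_entry_of_lt hj', restrict_entry_of_lt hj']
      · rw [extend_entry_of_le_of_lt hj' hj]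
        have hge : ¬ (T.entry i j : ℕ) < k := fun hlt => hj'.not_gt (lt_subshape_iff.2 ⟨hj, hlt⟩)
        exact Fin.ext ((Nat.lt_succ_iff.1 (hT i j hj)).antisymm (not_lt.1 hge)).symm

lemma tsum_prod_pow_content_succ (hla : Antitone la) (k : Fin N) (x : Fin N → ℝ≥0∞) :
    ∑' T : {T : SSYT N la // T.EntriesLT (k + 1)}, ∏ m, x m ^ T.1.content m =
      ∑' mu, skewSchurOne (x k) mu la *
        ∑' T : {T : SSYT N mu // T.EntriesLT k}, ∏ m, x m ^ T.1.content m := by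
  have hsupp : Function.support (fun mu => skewSchurOne (x k) mu la *
      ∑' T : {T : SSYT N mu // T.EntriesLT k}, ∏ m, x m ^ T.1.content m) ⊆
      {mu | IsHorizontalStrip mu la} := fun mu hmu =>
    isHorizontalStrip_of_skewSchurOne_ne_zero (left_ne_zero_of_mul hmu)
  rw [← tsum_subtype_eq_of_support_subset hsupp, ← (branchingEquiv hla k).tsum_eq,
    ENNReal.tsum_sigma']
  refine tsum_congr fun mu => ?_
  rw [skewSchurOne_of_strip mu.2, ← ENNReal.tsum_mul_left]
  exact tsum_congr fun T => prod_pow_content_extend x T.1 T.2 mu.2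

lemma tsum_prod_pow_content_zero (x : Fin N → ℝ≥0∞) :
    ∑' T : {T : SSYT N la // T.EntriesLT 0}, ∏ m, x m ^ T.1.content m =
      if la = 0 then 1 else 0 := by
  split_ifs with hla
  · subst hla
    let T₀ : SSYT N (0 : Fin N → ℕ) := ⟨fun i _ => ⟨0, i.pos⟩, fun _ _ _ _ h => absurd h (by simp),
      fun _ _ _ _ h => absurd h (by simp), fun _ _ _ => rfl⟩
    have : Unique {T : SSYT N (0 : Fin N → ℕ) // T.EntriesLT 0} :=
      ⟨⟨T₀, fun _ _ h => absurd h (by simp)⟩,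
        fun T => Subtype.ext (ext_of_lt fun _ _ h => absurd h (by simp))⟩
    rw [tsum_fintype, Fintype.sum_unique, prod_pow_content]
    simp
  · have : IsEmpty {T : SSYT N la // T.EntriesLT 0} := ⟨fun T => hla <| funext fun i =>
      Nat.eq_zero_of_not_pos fun hi => Nat.not_lt_zero _ (T.2 i 0 hi)⟩
    exact tsum_empty

lemma tsum_entriesLT_eq_eschur (hla : Antitone la) {k : ℕ} (hk : k ≤ N) (x : Fin N → ℝ≥0∞) :
    ∑' T : {T : SSYT N la // T.EntriesLT k}, ∏ m, x m ^ T.1.content m =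
      eschur (fun i => x (Fin.castLE hk i)) la := by
  induction k generalizing la with
  | zero => exact tsum_prod_pow_content_zero x
  | succ k ih =>
    refine (tsum_prod_pow_content_succ hla ⟨k, hk⟩ x).trans (tsum_congr fun mu => ?_)
    by_cases hmu : IsHorizontalStrip mu la
    · exact congrArg _ (ih hmu.antitone_left (Nat.le_of_succ_le hk))
    · simp only [skewSchurOne, if_neg hmu, zero_mul]

theorem tsum_prod_pow_content_eq_eschur (hla : Antitone la) (x : Fin N → ℝ≥0∞) :
    ∑' T : SSYT N la, ∏ m, x m ^ T.content m = eschur x la :=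
  ((Equiv.subtypeUnivEquiv fun (T : SSYT N la) i j _ => (T.entry i j).isLt).tsum_eq _).symm.trans
    (tsum_entriesLT_eq_eschur hla le_rfl x)

end SSYT

lemma schur_eq_toReal_eschur {N : ℕ} {la : Fin N → ℕ} (hla : Antitone la) {x : Fin N → ℝ}
    (hx : ∀ i, 0 ≤ x i) : schur N la x = (eschur (fun i => ENNReal.ofReal (x i)) la).toReal := by
  rw [← SSYT.tsum_prod_pow_content_eq_eschur hla, ENNReal.tsum_toReal_eq fun T =>
    ENNReal.prod_ne_top fun k _ => ENNReal.pow_ne_top ENNReal.ofReal_ne_top, schur]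
  simp only [ENNReal.toReal_prod, ENNReal.toReal_pow, ENNReal.toReal_ofReal (hx _)]

lemma tsum_antitone_eschur_mul_eschur {N : ℕ} {x y : Fin N → ℝ} (hx : ∀ i, 0 ≤ x i)
    (hy : ∀ i, 0 ≤ y i) (hxy : ∀ i j, x i * y j < 1) :
    ∑' la : {l : Fin N → ℕ // Antitone l}, eschur (fun i => ENNReal.ofReal (x i)) la.1 *
        eschur (fun j => ENNReal.ofReal (y j)) la.1 =
      ENNReal.ofReal (∏ i, ∏ j, (1 - x i * y j)⁻¹) := by
  have hpos : ∀ i j, 0 < 1 - x i * y j := fun i j => sub_pos.2 (hxy i j)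
  refine (tsum_subtype_eq_of_support_subset (s := {l | Antitone l}) fun la hla =>
    antitone_of_eschur_ne_zero (left_ne_zero_of_mul hla)).trans ?_
  rw [tsum_eschur_mul_eschur le_rfl, ENNReal.ofReal_prod_of_nonneg fun i _ =>
    prod_nonneg fun j _ => (inv_pos.2 (hpos i j)).le]
  refine prod_congr rfl fun i _ => ?_
  rw [ENNReal.ofReal_prod_of_nonneg fun j _ => (inv_pos.2 (hpos i j)).le]
  refine prod_congr rfl fun j _ => ?_
  rw [ENNReal.ofReal_inv_of_pos (hpos i j), ENNReal.ofReal_sub _ (mul_nonneg (hx i) (hy j)),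
    ENNReal.ofReal_one, ENNReal.ofReal_mul (hx i)]

theorem cauchy_identity_general {N : ℕ} {x y : Fin N → ℝ} (hx : ∀ i, 0 ≤ x i)
    (hy : ∀ i, 0 ≤ y i) (hxy : ∀ i j, x i * y j < 1) :
    Summable (fun lam : {l : Fin N → ℕ // Antitone l} => schur N lam.1 x * schur N lam.1 y) ∧
    ∑' lam : {l : Fin N → ℕ // Antitone l}, schur N lam.1 x * schur N lam.1 y
      = ∏ i : Fin N, ∏ j : Fin N, (1 - x i * y j)⁻¹ := by
  have hsum := tsum_antitone_eschur_mul_eschur hx hy hxy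
  have hfin := hsum.trans_ne ENNReal.ofReal_ne_top
  have hnonneg : 0 ≤ ∏ i, ∏ j, (1 - x i * y j)⁻¹ := prod_nonneg fun i _ => prod_nonneg fun j _ =>
    inv_nonneg.2 (sub_nonneg.2 (hxy i j).le)
  simp only [fun lam : {l : Fin N → ℕ // Antitone l} => schur_eq_toReal_eschur lam.2 hx,
    fun lam : {l : Fin N → ℕ // Antitone l} => schur_eq_toReal_eschur lam.2 hy,
    ← ENNReal.toReal_mul]
  refine ⟨ENNReal.summable_toReal hfin, ?_⟩
  rw [← ENNReal.tsum_toReal_eq (ENNReal.ne_top_of_tsum_ne_top hfin), hsum,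
    ENNReal.toReal_ofReal hnonneg]

/-- **Cauchy identity.** For `x_1, …, x_N, y_1, …, y_N ∈ [0,1)`, the family
`s_λ(x) · s_λ(y)`, indexed by Young diagrams `λ` with at most `N` rows, is summable with sum
`∏_{i,j} 1/(1 - x_i y_j)`. -/
theorem cauchy_identity (N : ℕ) (hN : 0 < N) (x y : Fin N → ℝ)
    (hx : ∀ i, x i ∈ Set.Ico (0 : ℝ) 1) (hy : ∀ i, y i ∈ Set.Ico (0 : ℝ) 1) :
    Summable (fun lam : {l : Fin N → ℕ // Antitone l} => schur N lam.1 x * schur N lam.1 y) ∧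
    ∑' lam : {l : Fin N → ℕ // Antitone l}, schur N lam.1 x * schur N lam.1 y
      = ∏ i : Fin N, ∏ j : Fin N, (1 - x i * y j)⁻¹ :=
  cauchy_identity_general (fun i => (hx i).1) (fun j => (hy j).1) fun i j =>
    mul_lt_one_of_nonneg_of_lt_one_left (hx i).1 (hx i).2 (hy j).2.le
end

section
/- Harish-Chandra–Itzykson–Zuber formula: for every positive integer N there exists a constant c_N > 0, depending only on N, such that for all real diagonal N×N matrices C = diag(c_1,…,c_N) and D = diag(d_1,…,d_N) whose diagonal entries are pairwise distinct, ∫_{U(N)} exp(N·tr(U C U* D)) dm_N(U) = c_N · det((exp(N c_i d_j))_{1≤i,j≤N}) / (∏_{1≤i<j≤N}(c_i − c_j) · ∏_{1≤i<j≤N}(d_i − d_j)). -/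
/-- Matrices are endowed with the Borel sigma-algebra of their (entrywise) topology. -/
noncomputable instance matrixMeasurableSpace {m n α : Type*} [TopologicalSpace α] :
    MeasurableSpace (Matrix m n α) := borel _

open MeasureTheory

/-!
Averaging over the unitary orbit of `diag y` is a functional `φ` on the polynomials in the entries
of a matrix `X`, and it kills the image of every infinitesimal conjugation. With `Δ` the Vandermonde
polynomial, restrict `φ` to the polynomials `Δ(∂) q` in the diagonal entries. Harish-Chandra's
radial part computation says that multiplication by `tr X²` becomes multiplication of `q` by
`∑ Xᵢ²`, because `Δ` is harmonic. Iterated commutators with `tr ∂ᵏ`, whose radial part is `∑ ∂ᵢᵏ`,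
turn this into the same statement for `tr Xᵏ` and the power sum `∑ Xᵢᵏ`. Since `tr Xᵏ` is constant
on the orbit, `q ↦ φ (Δ(∂) q)` is an alternating functional on which every symmetric polynomial `s`
acts as the scalar `s(y)`. Such a functional is unique up to a factor: it is proportional to
`q ↦ ∑ sign(g) (g q)(y) / Δ(y)`, and `q = ∏ Xᵢⁱ` gives the factor. Taking for `q` the terms of the
series `exp (∑ xᵢ Xᵢ)`, on which `Δ(∂)` acts as `Δ(x)`, and summing gives the formula.
-/

namespace HCIZ

open MvPolynomial

section Derivation

variable {R A ι : Type*} [CommRing R] [CommRing A] [Algebra R A]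

theorem derivation_sum_apply {M : Type*} [AddCommGroup M] [Module A M] [Module R M]
    (s : Finset ι) (D : ι → Derivation R A M) (a : A) :
    (∑ i ∈ s, D i) a = ∑ i ∈ s, D i a := by
  rw [← Derivation.coeFnAddMonoidHom_apply, map_sum, Finset.sum_apply]
  rfl

theorem derivation_finsetProd [DecidableEq ι] (D : Derivation R A A) (s : Finset ι) (f : ι → A) :
    D (∏ i ∈ s, f i) = ∑ i ∈ s, (∏ j ∈ s.erase i, f j) * D (f i) := by
  induction s using Finset.induction_on with
  | empty => simp
  | insert a s ha ih =>
    have hs : ∀ i ∈ s, (∏ j ∈ (insert a s).erase i, f j) = f a * ∏ j ∈ s.erase i, f j := by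
      intro i hi
      rw [Finset.erase_insert_of_ne (ne_of_mem_of_not_mem hi ha).symm,
        Finset.prod_insert fun h => ha (Finset.mem_of_mem_erase h)]
    rw [Finset.prod_insert ha, D.leibniz, ih, Finset.sum_insert ha, Finset.erase_insert ha,
      smul_eq_mul, smul_eq_mul, add_comm, Finset.mul_sum]
    exact congrArg _ (Finset.sum_congr rfl fun i hi => by rw [hs i hi, mul_assoc])

end Derivation

section DiffOp

variable {R σ τ : Type*} [CommRing R]

/-- The partial derivative `∂ᵢ` as an element of the ring of linear endomorphisms. -/
noncomputable abbrev pderivEnd (i : σ) : Module.End R (MvPolynomial σ R) :=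
  (pderiv i : Derivation R _ _).toLinearMap

theorem commute_pderivEnd (i j : σ) : Commute (pderivEnd (R := R) i) (pderivEnd j) := by
  have h : ⁅(pderiv i : Derivation R (MvPolynomial σ R) (MvPolynomial σ R)), pderiv j⁆ = 0 :=
    derivation_ext fun k => by
      classical
      rw [Derivation.commutator_apply, pderiv_X, pderiv_X]
      simp only [Pi.single_apply]
      split_ifs <;> simp
  refine LinearMap.ext fun p => sub_eq_zero.mp ?_
  simpa [Derivation.commutator_apply] using congrArg (· p) h

open scoped IsMulCommutative in
/-- The constant coefficient differential operator `P(∂)`, obtained by substituting `∂ᵢ` for the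
`i`-th variable of `P`. -/
noncomputable def diffOp : MvPolynomial σ R →ₐ[R] Module.End R (MvPolynomial σ R) :=
  letI partials : Set (Module.End R (MvPolynomial σ R)) := Set.range pderivEnd
  haveI : IsMulCommutative (Algebra.adjoin R partials) := Algebra.isMulCommutative_adjoin R <| by
    rintro _ ⟨i, rfl⟩ _ ⟨j, rfl⟩
    exact commute_pderivEnd i j
  (Algebra.adjoin R partials).val.comp
    (aeval fun i => ⟨pderivEnd i, Algebra.subset_adjoin ⟨i, rfl⟩⟩)

@[simp]
theorem diffOp_X (i : σ) : diffOp (X i : MvPolynomial σ R) = pderivEnd i := by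
  simp [diffOp]

theorem diffOp_mul_X_apply (P q : MvPolynomial σ R) (i : σ) :
    diffOp (P * X i) q = diffOp P (pderiv i q) := by
  simp

theorem diffOp_apply_X_mul (P q : MvPolynomial σ R) (i : σ) :
    diffOp P (X i * q) = X i * diffOp P q + diffOp (pderiv i P) q := by
  classical
  induction P using MvPolynomial.induction_on generalizing q with
  | C a => simp
  | add P P' hP hP' => simp only [map_add, LinearMap.add_apply, hP, hP']; ring
  | mul_X P j hP =>
    simp only [diffOp_mul_X_apply, pderiv_mul, map_add, LinearMap.add_apply, hP, pderiv_X,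
      Pi.single_apply, eq_comm (a := j)]
    split_ifs with h
    · simp only [one_mul, h, mul_one]
      ring
    · simp

theorem rename_diffOp {f : σ → τ} (hf : Function.Injective f) (P q : MvPolynomial σ R) :
    rename f (diffOp P q) = diffOp (rename f P) (rename f q) := by
  induction P using MvPolynomial.induction_on generalizing q with
  | C a => simp
  | add P P' hP hP' => simp only [map_add, LinearMap.add_apply, hP, hP']
  | mul_X P j hP =>
    rw [diffOp_mul_X_apply, hP, map_mul, rename_X, diffOp_mul_X_apply, pderiv_rename hf]

theorem commute_diffOp (P Q : MvPolynomial σ R) : Commute (diffOp P) (diffOp Q) :=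
  (Commute.all P Q).map diffOp

theorem diffOp_apply_sum_X_sq_mul [Fintype σ] (P q : MvPolynomial σ R) :
    diffOp P ((∑ i, X i ^ 2) * q) = (∑ i, X i ^ 2) * diffOp P q
      + 2 * ∑ i, X i * diffOp (pderiv i P) q + diffOp (∑ i, pderiv i (pderiv i P)) q := by
  simp only [Finset.sum_mul, map_sum, pow_two, mul_assoc, diffOp_apply_X_mul, Finset.mul_sum,
    mul_add, LinearMap.sum_apply, ← Finset.sum_add_distrib]
  exact Finset.sum_congr rfl fun i _ => by ring

end DiffOp

section Vandermonde

variable {R : Type*} [CommRing R] {N : ℕ}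

theorem det_vandermonde_smul (a : R) (x : Fin N → R) :
    (Matrix.vandermonde (a • x)).det =
      (∏ i : Fin N, ∏ _j ∈ Finset.Ioi i, a) * (Matrix.vandermonde x).det := by
  simp only [Matrix.det_vandermonde, ← Finset.prod_mul_distrib, Pi.smul_apply, smul_eq_mul, mul_sub]

theorem det_vandermonde_mul_det_vandermonde (x y : Fin N → R) :
    (Matrix.vandermonde x).det * (Matrix.vandermonde y).det =
      (∏ i : Fin N, ∏ j ∈ Finset.Ioi i, (x i - x j)) *
        ∏ i : Fin N, ∏ j ∈ Finset.Ioi i, (y i - y j) := by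
  simp only [Matrix.det_vandermonde, ← Finset.prod_mul_distrib]
  exact Finset.prod_congr rfl fun i _ => Finset.prod_congr rfl fun j _ => by ring

variable (R N) in
/-- The Vandermonde determinant `Δ = ∏_{i < j} (zⱼ - zᵢ)` of the variables. -/
noncomputable def vandermondePoly : MvPolynomial (Fin N) R :=
  (Matrix.vandermonde X).det

theorem eval_vandermondePoly (x : Fin N → R) :
    eval x (vandermondePoly R N) = (Matrix.vandermonde x).det := by
  rw [vandermondePoly, RingHom.map_det]
  congr 1
  ext i j
  simp [Matrix.vandermonde_apply]

theorem vandermondePoly_eq_sum : vandermondePoly R N =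
    ∑ σ : Equiv.Perm (Fin N), (Equiv.Perm.sign σ : ℤ) • ∏ i, X (σ i) ^ (i : ℕ) := by
  simp [vandermondePoly, Matrix.det_apply, Units.smul_def]

theorem rename_vandermondePoly (σ : Equiv.Perm (Fin N)) :
    rename σ (vandermondePoly R N) = (Equiv.Perm.sign σ : ℤ) • vandermondePoly R N := by
  rw [vandermondePoly, AlgHom.map_det, zsmul_eq_mul, ← Matrix.det_permute]
  congr 1
  ext i j
  simp [Matrix.vandermonde_apply]

/-- The factor of the Vandermonde product indexed by the pair `p`, which is `1` for the pairs not
in increasing order. -/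
noncomputable def vandermondeFactor (p : Fin N × Fin N) : MvPolynomial (Fin N) R :=
  if p.1 < p.2 then X p.2 - X p.1 else 1

theorem vandermondePoly_eq_prod :
    vandermondePoly R N = ∏ p : Fin N × Fin N, vandermondeFactor p := by
  rw [vandermondePoly, Matrix.det_vandermonde, Fintype.prod_prod_type]
  refine Finset.prod_congr rfl fun i _ => ?_
  simp only [vandermondeFactor, ← Finset.prod_filter, Finset.filter_lt_eq_Ioi]

/-- The quotient `Δ / (zᵢ - zⱼ)`, with the value `0` for `i = j`. -/
noncomputable def vandermondeQuot (i j : Fin N) : MvPolynomial (Fin N) R :=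
  (if j < i then ∏ p ∈ Finset.univ.erase (j, i), vandermondeFactor p else 0) -
    if i < j then ∏ p ∈ Finset.univ.erase (i, j), vandermondeFactor p else 0

theorem vandermondeQuot_swap (i j : Fin N) :
    vandermondeQuot (R := R) j i = -vandermondeQuot i j := by
  simp [vandermondeQuot]

theorem sub_mul_vandermondeQuot {i j : Fin N} (h : i ≠ j) :
    (X i - X j) * vandermondeQuot i j = vandermondePoly R N := by
  rw [vandermondePoly_eq_prod]
  rcases h.lt_or_gt with h | h
  · rw [← Finset.mul_prod_erase _ _ (Finset.mem_univ (i, j))]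
    simp only [vandermondeQuot, vandermondeFactor, h, h.not_gt, if_true, if_false]
    ring
  · rw [← Finset.mul_prod_erase _ _ (Finset.mem_univ (j, i))]
    simp [vandermondeQuot, vandermondeFactor, h, h.not_gt]

theorem pderiv_vandermondePoly (i : Fin N) :
    pderiv i (vandermondePoly R N) = ∑ j, vandermondeQuot i j := by
  have hfactor : ∀ a b : Fin N, pderiv i (vandermondeFactor (R := R) (a, b)) =
      (if b = i then if a < b then 1 else 0 else 0) -
        if a = i then if a < b then 1 else 0 else 0 := by
    intro a b
    unfold vandermondeFactor
    split_ifs <;> simp_all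
  rw [vandermondePoly_eq_prod, derivation_finsetProd]
  simp only [Fintype.sum_prod_type, hfactor, mul_sub, mul_ite, mul_one, mul_zero,
    Finset.sum_sub_distrib, Finset.sum_ite_eq', Finset.mem_univ, if_true, vandermondeQuot]
  congr 1
  rw [Finset.sum_comm]
  simp

theorem pderiv_pderiv_prod_X_pow (σ : Equiv.Perm (Fin N)) (e : Fin N → ℕ) (i : Fin N) :
    pderiv (σ i) (pderiv (σ i) (∏ l, X (σ l) ^ e l : MvPolynomial (Fin N) R)) =
      (e i * (e i - 1) : ℕ) • ∏ l, X (σ l) ^ Function.update e i (e i - 2) l := by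
  have hrest : pderiv (σ i) (∏ l ∈ Finset.univ.erase i, X (σ l) ^ e l : MvPolynomial (Fin N) R)
      = 0 := by
    rw [derivation_finsetProd]
    refine Finset.sum_eq_zero fun l hl => ?_
    rw [pderiv_pow, pderiv_X_of_ne (σ.injective.ne (Finset.ne_of_mem_erase hl)), mul_zero, mul_zero]
  have hupdate : ∏ l ∈ Finset.univ.erase i, X (σ l) ^ Function.update e i (e i - 2) l =
      (∏ l ∈ Finset.univ.erase i, X (σ l) ^ e l : MvPolynomial (Fin N) R) :=
    Finset.prod_congr rfl fun l hl => by
      rw [Function.update_of_ne (Finset.ne_of_mem_erase hl)]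
  rw [← Finset.mul_prod_erase _ _ (Finset.mem_univ i),
    ← Finset.mul_prod_erase _ (fun l => X (σ l) ^ Function.update e i (e i - 2) l)
      (Finset.mem_univ i), hupdate]
  simp only [Derivation.leibniz, Derivation.leibniz_pow, Derivation.map_natCast, hrest,
    pderiv_X_self, Function.update_self, smul_eq_mul, nsmul_eq_mul, Nat.cast_mul, Nat.sub_sub,
    Nat.reduceAdd, mul_zero, mul_one, zero_add, add_zero]
  ring

theorem sum_pderiv_pderiv_vandermondePoly :
    ∑ i, pderiv i (pderiv i (vandermondePoly R N)) = 0 := by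
  let shifted (j : Fin N) : Matrix (Fin N) (Fin N) (MvPolynomial (Fin N) R) :=
    Matrix.of fun i l => X i ^ Function.update (fun k : Fin N => (k : ℕ)) j (j - 2) l
  have hshifted : ∀ j : Fin N, ((j * (j - 1) : ℕ)) • (shifted j).det = 0 := by
    intro j
    rcases lt_or_ge (j : ℕ) 2 with hj | hj
    · have : (j * (j - 1) : ℕ) = 0 := by interval_cases (j : ℕ) <;> rfl
      rw [this, zero_smul]
    · have hne : (⟨j - 2, by omega⟩ : Fin N) ≠ j := by simp [Fin.ext_iff]; omega
      rw [Matrix.det_zero_of_column_eq hne fun i => by simp [shifted, hne], smul_zero]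
  calc ∑ i, pderiv i (pderiv i (vandermondePoly R N))
      = ∑ σ : Equiv.Perm (Fin N), (Equiv.Perm.sign σ : ℤ) •
          ∑ j, pderiv (σ j) (pderiv (σ j) (∏ l, X (σ l) ^ (l : ℕ))) := by
        simp only [vandermondePoly_eq_sum, map_sum, map_zsmul]
        rw [Finset.sum_comm]
        exact Finset.sum_congr rfl fun σ _ => by
          rw [← Finset.smul_sum, ← Equiv.sum_comp σ]
    _ = ∑ j : Fin N, ((j * (j - 1) : ℕ)) • (shifted j).det := by
        simp only [pderiv_pderiv_prod_X_pow, Matrix.det_apply, Finset.smul_sum, Units.smul_def]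
        rw [Finset.sum_comm]
        exact Finset.sum_congr rfl fun j _ => Finset.sum_congr rfl fun σ _ => smul_comm _ _ _
    _ = 0 := Finset.sum_eq_zero fun j _ => hshifted j

theorem pderivEnd_pow_monomial {σ : Type*} (i : σ) (k : ℕ) (t : σ →₀ ℕ) :
    (pderivEnd i ^ k) (monomial t (1 : R)) =
      monomial (t - Finsupp.single i k) ((t i).descFactorial k : R) := by
  induction k with
  | zero => simp
  | succ k ih =>
    rw [pow_succ', Module.End.mul_apply, ih]
    simp only [Derivation.coeFn_coe, pderiv_monomial,
      tsub_tsub, ← Finsupp.single_add, Finsupp.tsub_apply, Finsupp.single_eq_same,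
      Nat.descFactorial_succ, Nat.cast_mul, mul_comm]

theorem diffOp_monomial_monomial {σ : Type*} [Fintype σ] (s t : σ →₀ ℕ) :
    diffOp (monomial s (1 : R)) (monomial t 1) =
      monomial (t - s) (∏ i, ((t i).descFactorial (s i) : R)) := by
  classical
  induction s using Finsupp.induction_linear generalizing t with
  | zero => simp
  | add s s' hs hs' =>
    have hcoeff : ∀ i, ((t - s') i).descFactorial (s i) * (t i).descFactorial (s' i) =
        (t i).descFactorial ((s + s') i) := fun i => by
      simpa using Nat.descFactorial_mul_descFactorial (n := t i) (Nat.le_add_left (s' i) (s i))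
    rw [← mul_one (1 : R), ← monomial_mul, map_mul, Module.End.mul_apply, mul_one, hs',
      ← mul_one (∏ i, _), ← smul_eq_mul, ← smul_monomial, map_smul, hs, smul_monomial,
      smul_eq_mul, mul_comm, ← Finset.prod_mul_distrib, tsub_tsub, add_comm s']
    simp only [← Nat.cast_mul, hcoeff]
  | single i k =>
    rw [← X_pow_eq_monomial, map_pow, diffOp_X, pderivEnd_pow_monomial,
      Finset.prod_eq_single i (fun j _ hj => by simp [hj]) (by simp), Finsupp.single_eq_same]

theorem exists_lt_apply_of_ne_one {σ : Equiv.Perm (Fin N)} (hσ : σ ≠ 1) : ∃ i, i < σ i := by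
  by_contra! hle
  have hsum : ∑ i, (σ i : ℕ) = ∑ i : Fin N, (i : ℕ) := Equiv.sum_comp σ fun i : Fin N => (i : ℕ)
  have heq := (Finset.sum_eq_sum_iff_of_le fun i _ => Fin.le_def.mp (hle i)).mp hsum
  exact hσ (Equiv.ext fun i => Fin.ext (heq i (Finset.mem_univ i)))

theorem diffOp_vandermondePoly_staircase :
    diffOp (vandermondePoly R N) (∏ i : Fin N, X i ^ (i : ℕ)) =
      C (∏ i : Fin N, ((i : ℕ).factorial : R)) := by
  have hmon : ∀ σ : Equiv.Perm (Fin N), (∏ i, X (σ i) ^ (i : ℕ) : MvPolynomial (Fin N) R) =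
      monomial (Finsupp.equivFunOnFinite.symm fun i => ((σ.symm i : Fin N) : ℕ)) 1 := fun σ => by
    rw [monomial_eq, C_1, one_mul, Finsupp.prod_fintype _ _ fun _ => pow_zero _]
    exact Fintype.prod_equiv σ _ _ fun i => by simp
  have hvanish : ∀ σ : Equiv.Perm (Fin N), σ ≠ 1 →
      ∏ i : Fin N, ((i : ℕ).descFactorial (σ.symm i) : R) = 0 := by
    intro σ hσ
    obtain ⟨i, hi⟩ := exists_lt_apply_of_ne_one (σ := σ.symm) (inv_ne_one.mpr hσ)
    refine Finset.prod_eq_zero (Finset.mem_univ i) ?_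
    rw [Nat.descFactorial_eq_zero_iff_lt.mpr hi, Nat.cast_zero]
  have hstair : (∏ i : Fin N, X i ^ (i : ℕ) : MvPolynomial (Fin N) R) =
    monomial (Finsupp.equivFunOnFinite.symm fun i : Fin N => (i : ℕ)) 1 := hmon 1
  rw [vandermondePoly_eq_sum, map_sum, LinearMap.sum_apply, Finset.sum_eq_single 1]
  · simp [hstair, diffOp_monomial_monomial, Nat.descFactorial_self]
  · intro σ _ hσ
    simp [hstair, hmon, diffOp_monomial_monomial, hvanish σ hσ]
  · simp

end Vandermonde

section Commutators

attribute [local instance] LieRing.ofAssociativeRing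

theorem lie_mul {A : Type*} [Ring A] (a b c : A) : ⁅a, b * c⁆ = ⁅a, b⁆ * c + b * ⁅a, c⁆ := by
  simp only [Ring.lie_def]
  noncomm_ring

theorem iterate_lie_mul {A : Type*} [Ring A] {a x : A} (h : ⁅a, ⁅a, x⁆⁆ = 0) (b : A) (k : ℕ) :
    (⁅a, ·⁆)^[k + 1] (x * b) = x * (⁅a, ·⁆)^[k + 1] b + (k + 1) • (⁅a, x⁆ * (⁅a, ·⁆)^[k] b) := by
  induction k with
  | zero => simp [lie_mul, add_comm]
  | succ k ih =>
    rw [Function.iterate_succ_apply', ih]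
    simp only [lie_add, lie_nsmul, lie_mul, h, zero_mul, zero_add, ← Function.iterate_succ_apply']
    rw [add_nsmul (⁅a, x⁆ * _) (k + 1) 1, one_nsmul]
    abel

theorem iterate_lie_pow {A : Type*} [Ring A] {a x : A} (h : ⁅a, ⁅a, x⁆⁆ = 0) (k : ℕ) :
    (⁅a, ·⁆)^[k] (x ^ k) = k.factorial • ⁅a, x⁆ ^ k := by
  have hpow : ∀ k : ℕ, ⁅a, ⁅a, x⁆ ^ k⁆ = 0 := fun k =>
    sub_eq_zero.mpr (Commute.pow_right (show Commute a ⁅a, x⁆ from sub_eq_zero.mp h) k)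
  induction k with
  | zero => simp
  | succ k ih =>
    rw [pow_succ', iterate_lie_mul h, Function.iterate_succ_apply', ih, lie_nsmul, hpow, smul_zero,
      mul_zero, zero_add, mul_smul_comm, ← pow_succ', smul_smul, Nat.factorial_succ]

theorem iterate_lie_trace_pow {A n : Type*} [Ring A] [Fintype n] [DecidableEq n] {a : A}
    {S S' : Matrix n n A} (hS : ∀ i j, ⁅a, S i j⁆ = S' i j) (hS' : ∀ i j, ⁅a, S' i j⁆ = 0) (k : ℕ) :
    (⁅a, ·⁆)^[k] (S ^ k).trace = k.factorial • (S' ^ k).trace := by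
  have hentry : ∀ (M : Matrix n n A) i j, ⁅Matrix.scalar n a, M⁆ i j = ⁅a, M i j⁆ := fun M i j => by
    simp [Ring.lie_def]
  have hlie : ⁅Matrix.scalar n a, S⁆ = S' := by
    ext i j
    rw [hentry, hS]
  have hlie' : ⁅Matrix.scalar n a, S'⁆ = 0 := by
    ext i j
    rw [hentry, hS', Matrix.zero_apply]
  have htrace : Function.Semiconj Matrix.trace (⁅Matrix.scalar n a, ·⁆) (⁅a, ·⁆) :=
    fun M : Matrix n n A => by
      simp only [Matrix.trace, Matrix.diag_apply, hentry, lie_sum]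
  rw [← htrace.iterate_right k, iterate_lie_pow (by rw [hlie, hlie']), hlie, Matrix.trace_smul]

variable {R A n : Type*} [CommRing R] [Ring A] [Algebra R A] [Fintype n] [DecidableEq n]

theorem commute_scalar_sub_map_iff {a : A} {K : Matrix n n R} {S : Matrix n n A} :
    Commute (Matrix.scalar n a - K.map (algebraMap R A)) S ↔
      ∀ i j, ⁅a, S i j⁆ = ∑ l, (K i l • S l j - K l j • S i l) := by
  rw [commute_iff_eq, sub_mul, mul_sub, ← Matrix.ext_iff]
  refine forall₂_congr fun i j => ?_
  rw [Matrix.sub_apply, Matrix.sub_apply, Matrix.scalar_apply, Matrix.diagonal_mul,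
    Matrix.mul_diagonal, sub_eq_sub_iff_sub_eq_sub]
  simp only [Matrix.mul_apply, Matrix.map_apply, Ring.lie_def, Finset.sum_sub_distrib,
    Algebra.smul_def, Algebra.commutes _ (S i _)]

theorem commute_trace {a : A} {K : Matrix n n R} {S : Matrix n n A}
    (h : Commute (Matrix.scalar n a - K.map (algebraMap R A)) S) : Commute a S.trace := by
  have hK : (K.map (algebraMap R A) * S).trace = (S * K.map (algebraMap R A)).trace := by
    simp only [Matrix.trace, Matrix.diag_apply, Matrix.mul_apply, Matrix.map_apply,
      Algebra.commutes]
    exact Finset.sum_comm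
  have ha := congrArg Matrix.trace h.eq
  rw [sub_mul, mul_sub, Matrix.trace_sub, Matrix.trace_sub, hK, sub_left_inj] at ha
  rw [commute_iff_eq]
  simpa [Matrix.trace, ← Finset.mul_sum, ← Finset.sum_mul] using ha

end Commutators

section Conjugation

variable {R n : Type*} [CommRing R] [Fintype n]

/-- The infinitesimal conjugation `X ↦ K X - X K` acting as a derivation on the polynomials in the
entries of a square matrix `X`. -/
noncomputable def conjDeriv : Matrix n n R →ₗ[R]
    Derivation R (MvPolynomial (n × n) R) (MvPolynomial (n × n) R) where
  toFun K := mkDerivation R fun p => ∑ l, (K p.1 l • X (l, p.2) - K l p.2 • X (p.1, l))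
  map_add' K L := derivation_ext fun p => by
    simp only [mkDerivation_X, Derivation.add_apply, Matrix.add_apply, add_smul,
      ← Finset.sum_add_distrib, add_sub_add_comm]
  map_smul' r K := derivation_ext fun p => by
    simp only [mkDerivation_X, Derivation.smul_apply, Matrix.smul_apply, smul_assoc, ← smul_sub,
      Finset.smul_sum, RingHom.id_apply]

theorem conjDeriv_X (K : Matrix n n R) (i j : n) :
    conjDeriv K (X (i, j)) = ∑ l, (K i l • X (l, j) - K l j • X (i, l)) :=
  mkDerivation_X _ _ _

theorem lie_conjDeriv_pderiv (K : Matrix n n R) (i j : n) :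
    ⁅conjDeriv K, (pderiv (j, i) : Derivation R (MvPolynomial (n × n) R) _)⁆ =
      ∑ l, (K i l • pderiv (j, l) - K l j • pderiv (l, i)) := by
  refine derivation_ext fun p => ?_
  classical
  rw [derivation_sum_apply, Derivation.commutator_apply]
  simp only [Derivation.sub_apply, Derivation.smul_apply]
  obtain ⟨a, b⟩ := p
  by_cases ha : a = j <;> by_cases hb : b = i <;>
    simp [conjDeriv_X, pderiv_X, Pi.single_apply, ha, hb]

/-- A functional on polynomials in the entries of a matrix is conjugation invariant (in the
infinitesimal sense) if it kills all `conjDeriv K Q`. -/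
def IsConjInvariant (φ : MvPolynomial (n × n) R →ₗ[R] R) : Prop :=
  ∀ K Q, φ (conjDeriv K Q) = 0

/-- The matrix of the operators of multiplication by the matrix entries `X i j`. -/
noncomputable def mulMatrix : Matrix n n (Module.End R (MvPolynomial (n × n) R)) :=
  (Matrix.mvPolynomialX n n R).map (Algebra.lmul R _)

/-- The matrix with entries `∂ / ∂Xⱼᵢ`; the transposition makes it transform under conjugation in
the same way as `X`. -/
noncomputable def pderivMatrix : Matrix n n (Module.End R (MvPolynomial (n × n) R)) :=
  Matrix.of fun i j => pderivEnd (j, i)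

variable [DecidableEq n]

theorem commute_mulMatrix (K : Matrix n n R) :
    Commute (Matrix.scalar n (conjDeriv K).toLinearMap - K.map (algebraMap R _)) mulMatrix := by
  refine commute_scalar_sub_map_iff.mpr fun i j => LinearMap.ext fun Q => ?_
  simp only [mulMatrix, Matrix.map_apply, Matrix.mvPolynomialX_apply, Ring.lie_def,
    LinearMap.sub_apply, Module.End.mul_apply, Derivation.coeFn_coe, Algebra.coe_lmul_eq_mul,
    LinearMap.mul_apply', Derivation.leibniz, smul_eq_mul, conjDeriv_X, LinearMap.sum_apply,
    LinearMap.smul_apply, add_sub_cancel_left, Finset.mul_sum]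
  exact Finset.sum_congr rfl fun l _ => by simp only [smul_eq_C_mul]; ring

theorem commute_pderivMatrix (K : Matrix n n R) :
    Commute (Matrix.scalar n (conjDeriv K).toLinearMap - K.map (algebraMap R _)) pderivMatrix := by
  refine commute_scalar_sub_map_iff.mpr fun i j => LinearMap.ext fun Q => ?_
  simpa [pderivMatrix, Ring.lie_def, Derivation.commutator_apply, derivation_sum_apply]
    using congrArg (· Q) (lie_conjDeriv_pderiv K i j)

end Conjugation

section RadialPart

attribute [local instance] LieRing.ofAssociativeRing

variable {R : Type*} [CommRing R] {N : ℕ}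

/-- The embedding of the polynomials in `X i` into the polynomials in the entries of a matrix which
sends `X i` to the diagonal entry `X (i, i)`. -/
noncomputable abbrev diagEmb : MvPolynomial (Fin N) R →ₐ[R] MvPolynomial (Fin N × Fin N) R :=
  rename fun i => (i, i)

theorem diagonal_injective : Function.Injective fun i : Fin N => (i, i) :=
  fun _ _ h => congrArg Prod.fst h

/-- The map `q ↦ Δ(∂) q`, with values in the polynomials in the diagonal entries of a matrix. -/
noncomputable def radialMap : MvPolynomial (Fin N) R →ₗ[R] MvPolynomial (Fin N × Fin N) R :=
  diagEmb.toLinearMap ∘ₗ diffOp (vandermondePoly R N)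

theorem radialMap_apply (q : MvPolynomial (Fin N) R) :
    radialMap q = diagEmb (diffOp (vandermondePoly R N) q) := rfl

theorem conjDeriv_single_X (i j a b : Fin N) : conjDeriv (Matrix.single i j (1 : R)) (X (a, b)) =
    (if i = a then X (j, b) else 0) - if j = b then X (a, i) else 0 := by
  simp [conjDeriv_X, Matrix.single_apply, ite_and]

theorem conjDeriv_single_diagEmb (i j : Fin N) (r : MvPolynomial (Fin N) R) :
    conjDeriv (Matrix.single i j 1) (diagEmb r) =
      X (j, i) * diagEmb (pderiv i r - pderiv j r) := by
  induction r using MvPolynomial.induction_on with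
  | C a => simp
  | add p q hp hq => simp only [map_add, hp, hq, map_sub]; ring
  | mul_X p k hp =>
    have hX : conjDeriv (Matrix.single i j 1) (diagEmb (X k)) =
        X (j, i) * diagEmb (pderiv i (X k) - pderiv j (X k) : MvPolynomial (Fin N) R) := by
      simp only [rename_X, conjDeriv_single_X, pderiv_X, Pi.single_apply, eq_comm (a := k)]
      split_ifs with hi hj hj <;> simp [hi, hj]
    simp only [map_mul, Derivation.leibniz, hp, hX, map_sub, map_add, smul_eq_mul]
    ring

theorem IsConjInvariant.apply_X_mul_X_mul_diagEmb
    {φ : MvPolynomial (Fin N × Fin N) R →ₗ[R] R} (hφ : IsConjInvariant φ) (i j : Fin N)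
    (r : MvPolynomial (Fin N) R) :
    φ (X (i, j) * X (j, i) * diagEmb (pderiv i r - pderiv j r)) =
      φ (diagEmb ((X i - X j) * r)) := by
  rw [← sub_eq_zero, ← map_sub, ← hφ (Matrix.single i j 1) (X (i, j) * diagEmb r)]
  congr 1
  simp only [Derivation.leibniz, conjDeriv_single_diagEmb, conjDeriv_single_X, map_sub, map_mul,
    rename_X, smul_eq_mul, if_true]
  ring

/-- The operator `a` on the polynomials in `X i` is a radial part of the operator `b` on the
polynomials in the entries of a matrix. Dually to the usual definition, the two operators are tested
against conjugation invariant functionals rather than on invariant functions, and `radialMap`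
incorporates the conjugation of `a` by the Vandermonde polynomial. -/
structure IsRadialPart (b : Module.End R (MvPolynomial (Fin N × Fin N) R))
    (a : Module.End R (MvPolynomial (Fin N) R)) : Prop where
  commute : ∀ K, Commute b (conjDeriv K).toLinearMap
  intertwine : ∀ φ : MvPolynomial (Fin N × Fin N) R →ₗ[R] R, IsConjInvariant φ →
    ∀ q, φ (b (radialMap q)) = φ (radialMap (a q))

namespace IsRadialPart

variable {b b' : Module.End R (MvPolynomial (Fin N × Fin N) R)}
  {a a' : Module.End R (MvPolynomial (Fin N) R)}

theorem isConjInvariant_comp (h : IsRadialPart b a)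
    {φ : MvPolynomial (Fin N × Fin N) R →ₗ[R] R} (hφ : IsConjInvariant φ) :
    IsConjInvariant (φ ∘ₗ b) := fun K Q => by
  have hK : b (conjDeriv K Q) = conjDeriv K (b Q) := LinearMap.congr_fun (h.commute K).eq Q
  rw [LinearMap.comp_apply, hK, hφ]

theorem sub (h : IsRadialPart b a) (h' : IsRadialPart b' a') :
    IsRadialPart (b - b') (a - a') where
  commute K := (h.commute K).sub_left (h'.commute K)
  intertwine φ hφ q := by
    simp only [LinearMap.sub_apply, map_sub, h.intertwine φ hφ, h'.intertwine φ hφ]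

theorem mul (h : IsRadialPart b a) (h' : IsRadialPart b' a') :
    IsRadialPart (b * b') (a * a') where
  commute K := (h.commute K).mul_left (h'.commute K)
  intertwine φ hφ q :=
    (h'.intertwine _ (h.isConjInvariant_comp hφ) q).trans (h.intertwine φ hφ (a' q))

theorem iterate_lie (h : IsRadialPart b a) (h' : IsRadialPart b' a') :
    ∀ k : ℕ, IsRadialPart ((⁅b, ·⁆)^[k] b') ((⁅a, ·⁆)^[k] a')
  | 0 => h'
  | k + 1 => by
    rw [Function.iterate_succ_apply', Function.iterate_succ_apply', Ring.lie_def, Ring.lie_def]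
    exact (h.mul (h.iterate_lie h' k)).sub ((h.iterate_lie h' k).mul h)

end IsRadialPart

theorem commute_lmul_trace_pow {n : Type*} [Fintype n] [DecidableEq n] (k : ℕ) (K : Matrix n n R) :
    Commute (Algebra.lmul R _ (Matrix.mvPolynomialX n n R ^ k).trace)
      (conjDeriv K).toLinearMap := by
  have h := (commute_trace ((commute_mulMatrix K).pow_right k)).symm
  rwa [mulMatrix, ← AlgHom.mapMatrix_apply, ← map_pow, AlgHom.mapMatrix_apply,
    ← AddMonoidHom.map_trace] at h

theorem commute_trace_pderivMatrix_pow {n : Type*} [Fintype n] [DecidableEq n] (k : ℕ)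
    (K : Matrix n n R) : Commute (pderivMatrix ^ k).trace (conjDeriv K).toLinearMap :=
  (commute_trace ((commute_pderivMatrix K).pow_right k)).symm

theorem trace_mvPolynomialX_sq {n : Type*} [Fintype n] [DecidableEq n] :
    (Matrix.mvPolynomialX n n R ^ 2).trace = ∑ i, ∑ j, X (i, j) * X (j, i) := by
  simp [Matrix.trace, pow_two, Matrix.mul_apply]

theorem pderiv_trace_mvPolynomialX_sq {n : Type*} [Fintype n] [DecidableEq n] (i j : n) :
    pderiv (j, i) (Matrix.mvPolynomialX n n R ^ 2).trace = 2 * X (i, j) := by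
  simp [trace_mvPolynomialX_sq, pderiv_X, Pi.single_apply, ite_and, Finset.sum_add_distrib, two_mul]

theorem sum_sub_mul_diffOp_vandermondeQuot (q : MvPolynomial (Fin N) R) :
    ∑ i, ∑ j, (X i - X j) * diffOp (vandermondeQuot i j) q =
      2 * ∑ i, X i * diffOp (pderiv i (vandermondePoly R N)) q := by
  have hswap : ∑ i, ∑ j, X j * diffOp (vandermondeQuot i j) q =
      -∑ i, ∑ j, X i * diffOp (vandermondeQuot i j) q := by
    rw [Finset.sum_comm]
    simp only [← Finset.sum_neg_distrib]
    refine Finset.sum_congr rfl fun i _ => Finset.sum_congr rfl fun j _ => ?_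
    rw [vandermondeQuot_swap, map_neg, LinearMap.neg_apply, mul_neg]
  simp only [sub_mul, Finset.sum_sub_distrib, hswap, pderiv_vandermondePoly, map_sum,
    LinearMap.sum_apply, Finset.mul_sum, sub_neg_eq_add, ← Finset.sum_add_distrib, two_mul]

theorem pderiv_sub_pderiv_diffOp_vandermondeQuot {i j : Fin N} (h : i ≠ j)
    (q : MvPolynomial (Fin N) R) :
    pderiv i (diffOp (vandermondeQuot i j) q) - pderiv j (diffOp (vandermondeQuot i j) q) =
      diffOp (vandermondePoly R N) q := by
  simp [← sub_mul_vandermondeQuot h]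

theorem IsConjInvariant.apply_X_mul_X_mul_radialMap
    {φ : MvPolynomial (Fin N × Fin N) R →ₗ[R] R} (hφ : IsConjInvariant φ) (i j : Fin N)
    (q : MvPolynomial (Fin N) R) :
    φ (X (i, j) * X (j, i) * radialMap q) =
      φ (diagEmb ((if i = j then X i ^ 2 * diffOp (vandermondePoly R N) q else 0) +
        (X i - X j) * diffOp (vandermondeQuot i j) q)) := by
  split_ifs with h
  · simp [h, radialMap_apply, pow_two]
  · rw [radialMap_apply, ← pderiv_sub_pderiv_diffOp_vandermondeQuot h,
      hφ.apply_X_mul_X_mul_diagEmb, zero_add]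

theorem isRadialPart_trace_sq :
    IsRadialPart (Algebra.lmul R _ (Matrix.mvPolynomialX (Fin N) (Fin N) R ^ 2).trace)
      (Algebra.lmul R _ (∑ i, X i ^ 2)) where
  commute := commute_lmul_trace_pow 2
  intertwine φ hφ q := by
    rw [trace_mvPolynomialX_sq, Algebra.coe_lmul_eq_mul, LinearMap.mul_apply',
      Algebra.coe_lmul_eq_mul, LinearMap.mul_apply', radialMap_apply (_ * q),
      diffOp_apply_sum_X_sq_mul, sum_pderiv_pderiv_vandermondePoly,
      ← sum_sub_mul_diffOp_vandermondeQuot]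
    simp [Finset.sum_mul, hφ.apply_X_mul_X_mul_radialMap, Finset.sum_add_distrib,
      apply_ite diagEmb, apply_ite φ]

theorem pderivMatrix_pow_diagEmb (k : ℕ) (i j : Fin N) (r : MvPolynomial (Fin N) R) :
    (pderivMatrix ^ k) i j (diagEmb r) = diagEmb ((Matrix.diagonal pderivEnd ^ k) i j r) := by
  have hone : ∀ i j (r : MvPolynomial (Fin N) R),
      pderivMatrix i j (diagEmb r) = diagEmb (Matrix.diagonal pderivEnd i j r) := fun i j r => by
    by_cases h : i = j
    · simp [h, pderivMatrix, pderiv_rename diagonal_injective]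
    · rw [Matrix.diagonal_apply_ne _ h, LinearMap.zero_apply, map_zero]
      refine pderiv_eq_zero_of_notMem_vars fun hmem => ?_
      obtain ⟨l, -, hl⟩ := Finset.mem_image.mp (vars_rename _ _ hmem)
      exact h ((Prod.mk.inj hl).2.symm.trans (Prod.mk.inj hl).1)
  induction k generalizing i j r with
  | zero => by_cases h : i = j <;> simp [h]
  | succ k ih => simp only [pow_succ, Matrix.mul_apply, LinearMap.sum_apply,
      Module.End.mul_apply, hone, ih, map_sum]

theorem isRadialPart_trace_pderivMatrix_pow (k : ℕ) :
    IsRadialPart (pderivMatrix (R := R) (n := Fin N) ^ k).trace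
      (Matrix.diagonal pderivEnd ^ k).trace where
  commute := commute_trace_pderivMatrix_pow k
  intertwine φ _ q := by
    have hcomm : Commute (Matrix.diagonal pderivEnd ^ k).trace (diffOp (vandermondePoly R N)) := by
      rw [Matrix.diagonal_pow, Matrix.trace_diagonal]
      refine Commute.sum_left _ _ _ fun i _ => ?_
      simpa using commute_diffOp (X i ^ k) (vandermondePoly R N)
    rw [radialMap_apply, radialMap_apply, ← Module.End.mul_apply (diffOp _), ← hcomm.eq]
    simp [Matrix.trace, LinearMap.sum_apply, pderivMatrix_pow_diagEmb]

theorem lie_lmul_derivation {A : Type*} [CommRing A] [Algebra R A] (D : Derivation R A A) (a : A) :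
    ⁅Algebra.lmul R A a, D.toLinearMap⁆ = -Algebra.lmul R A (D a) := by
  ext b
  simp [Ring.lie_def, mul_comm]

theorem iterate_lie_lmul_trace_pow {A n : Type*} [CommRing A] [Algebra R A] [Fintype n]
    [DecidableEq n] {a : A} {c : R} {S : Matrix n n (Module.End R A)} {V : Matrix n n A}
    (h : ∀ i j, ⁅Algebra.lmul R A a, S i j⁆ = c • Algebra.lmul R A (V i j)) (k : ℕ) :
    (⁅Algebra.lmul R A a, ·⁆)^[k] (S ^ k).trace =
      (k.factorial * c ^ k) • Algebra.lmul R A (V ^ k).trace := by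
  have hV : ∀ i j, ⁅Algebra.lmul R A a, (c • V.map (Algebra.lmul R A)) i j⁆ = 0 := fun i j =>
    sub_eq_zero.mpr (((Commute.all a (V i j)).map (Algebra.lmul R A)).smul_right c)
  rw [iterate_lie_trace_pow (S' := c • V.map (Algebra.lmul R A)) h hV, smul_pow, Matrix.trace_smul,
    mul_smul, Nat.cast_smul_eq_nsmul, AddMonoidHom.map_trace, ← AlgHom.mapMatrix_apply,
    ← AlgHom.mapMatrix_apply, map_pow]

theorem lie_lmul_trace_sq_pderivMatrix {n : Type*} [Fintype n] [DecidableEq n] (i j : n) :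
    ⁅Algebra.lmul R _ (Matrix.mvPolynomialX n n R ^ 2).trace, pderivMatrix i j⁆ =
      (-2 : R) • Algebra.lmul R _ (Matrix.mvPolynomialX n n R i j) := by
  rw [pderivMatrix, Matrix.of_apply, lie_lmul_derivation, pderiv_trace_mvPolynomialX_sq, two_mul,
    Matrix.mvPolynomialX_apply, map_add]
  module

theorem lie_lmul_sum_sq_diagonal_pderivEnd {n : Type*} [Fintype n] [DecidableEq n] (i j : n) :
    ⁅Algebra.lmul R (MvPolynomial n R) (∑ l, X l ^ 2), Matrix.diagonal pderivEnd i j⁆ =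
      (-2 : R) • Algebra.lmul R _ ((Matrix.diagonal X : Matrix n n (MvPolynomial n R)) i j) := by
  by_cases h : i = j
  · have hp : pderiv i (∑ l, X l ^ 2 : MvPolynomial n R) = 2 * X i := by
      simp [pderiv_X, Pi.single_apply]
    rw [h, Matrix.diagonal_apply_eq, Matrix.diagonal_apply_eq, lie_lmul_derivation, ← h, hp,
      two_mul, map_add]
    module
  · simp [Ring.lie_def, h]

theorem IsConjInvariant.apply_trace_pow_mul_radialMap {F : Type*} [Field F] [CharZero F]
    {φ : MvPolynomial (Fin N × Fin N) F →ₗ[F] F} (hφ : IsConjInvariant φ) (k : ℕ)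
    (q : MvPolynomial (Fin N) F) :
    φ ((Matrix.mvPolynomialX (Fin N) (Fin N) F ^ k).trace * radialMap q) =
      φ (radialMap (psum (Fin N) F k * q)) := by
  have h := (isRadialPart_trace_sq.iterate_lie
    (isRadialPart_trace_pderivMatrix_pow k) k).intertwine φ hφ q
  rw [iterate_lie_lmul_trace_pow lie_lmul_trace_sq_pderivMatrix,
    iterate_lie_lmul_trace_pow lie_lmul_sum_sq_diagonal_pderivEnd, Matrix.diagonal_pow,
    Matrix.trace_diagonal] at h
  have hk : (k.factorial * (-2) ^ k : F) ≠ 0 :=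
    mul_ne_zero (Nat.cast_ne_zero.mpr k.factorial_ne_zero) (pow_ne_zero k (by norm_num))
  simp only [LinearMap.smul_apply, map_smul] at h
  exact smul_right_injective F hk h

end RadialPart

section Symmetric

variable {σ F : Type*} [Fintype σ] [Field F] [CharZero F]

theorem esymm_mem_adjoin_psum (k : ℕ) :
    esymm σ F k ∈ Algebra.adjoin F (Set.range (psum σ F)) := by
  induction k using Nat.strong_induction_on with
  | _ k ih =>
    rcases Nat.eq_zero_or_pos k with rfl | hk
    · simp
    have hk' : (k : F) ≠ 0 := Nat.cast_ne_zero.mpr hk.ne'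
    have hesymm : esymm σ F k = (k : F)⁻¹ • (k * esymm σ F k) := by
      rw [← nsmul_eq_mul, ← Nat.cast_smul_eq_nsmul F, inv_smul_smul₀ hk']
    rw [hesymm, mul_esymm_eq_sum]
    have hsign : ∀ l, (-1 : MvPolynomial σ F) ^ l ∈ Algebra.adjoin F (Set.range (psum σ F)) :=
      fun l => pow_mem (neg_mem (one_mem _)) l
    exact Subalgebra.smul_mem _ (mul_mem (hsign _) <| sum_mem fun a ha =>
      mul_mem (mul_mem (hsign _) (ih a.1 (Finset.mem_filter.mp ha).2))
        (Algebra.subset_adjoin (Set.mem_range_self _))) _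

theorem mem_adjoin_psum_of_isSymmetric {s : MvPolynomial σ F} (hs : s.IsSymmetric) :
    s ∈ Algebra.adjoin F (Set.range (psum σ F)) := by
  let e : Fin (Fintype.card σ) → MvPolynomial σ F := fun i => esymm σ F (i + 1)
  obtain ⟨p, hp⟩ := esymmAlgHom_surjective (σ := σ) (R := F) le_rfl ⟨s, hs⟩
  have hs' : s ∈ Algebra.adjoin F (Set.range e) := by
    rw [Algebra.adjoin_range_eq_range_aeval]
    exact ⟨p, (esymmAlgHom_apply p).symm.trans (congrArg Subtype.val hp)⟩
  exact Algebra.adjoin_le (Set.range_subset_iff.mpr fun i => esymm_mem_adjoin_psum _) hs'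

theorem apply_symmetric_mul {ℓ : MvPolynomial σ F →ₗ[F] F} {y : σ → F}
    (h : ∀ k q, ℓ (psum σ F k * q) = (∑ i, y i ^ k) * ℓ q) {s : MvPolynomial σ F}
    (hs : s.IsSymmetric) (q : MvPolynomial σ F) : ℓ (s * q) = eval y s * ℓ q := by
  replace hs := mem_adjoin_psum_of_isSymmetric hs
  induction hs using Algebra.adjoin_induction generalizing q with
  | mem x hx =>
    obtain ⟨k, rfl⟩ := hx
    rw [h, psum, map_sum]
    simp
  | algebraMap r => simp [← smul_eq_C_mul]
  | add p p' _ _ hp hp' => rw [add_mul, map_add, hp, hp', map_add, add_mul]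
  | mul p p' _ _ hp hp' => rw [mul_assoc, hp, hp', map_mul, mul_assoc]

end Symmetric

section Alternating

variable {σ R : Type*} [Fintype σ] [DecidableEq σ] [CommRing R]

/-- Polynomials that are multiplied by the sign of each permutation of the variables. -/
def IsAlternating (p : MvPolynomial σ R) : Prop :=
  ∀ g : Equiv.Perm σ, rename g p = (Equiv.Perm.sign g : ℤ) • p

theorem IsAlternating.mul {p q : MvPolynomial σ R} (hp : IsAlternating p) (hq : IsAlternating q) :
    (p * q).IsSymmetric := fun g => by
  rw [map_mul, hp g, hq g, smul_mul_smul_comm, ← Units.val_mul, Int.units_mul_self, Units.val_one,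
    one_smul]

/-- The antisymmetrization of a polynomial, without normalization. -/
noncomputable def alternation : MvPolynomial σ R →ₗ[R] MvPolynomial σ R :=
  ∑ g : Equiv.Perm σ, (Equiv.Perm.sign g : ℤ) • (rename g).toLinearMap

theorem alternation_apply (q : MvPolynomial σ R) :
    alternation q = ∑ g : Equiv.Perm σ, (Equiv.Perm.sign g : ℤ) • rename g q := by
  simp [alternation]

theorem isAlternating_alternation (q : MvPolynomial σ R) : IsAlternating (alternation q) :=
  fun g => by
    simp only [alternation_apply, map_sum, map_zsmul, Finset.smul_sum, rename_rename]
    refine Fintype.sum_equiv (Equiv.mulLeft g) _ _ fun g' => ?_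
    rw [Equiv.coe_mulLeft, smul_smul, ← Units.val_mul, Equiv.Perm.sign_mul, ← mul_assoc,
      Int.units_mul_self, one_mul, Equiv.Perm.coe_mul]

theorem apply_alternation {ℓ : MvPolynomial σ R →ₗ[R] R}
    (h : ∀ (g : Equiv.Perm σ) q, ℓ (rename g q) = (Equiv.Perm.sign g : ℤ) • ℓ q)
    (q : MvPolynomial σ R) : ℓ (alternation q) = (Fintype.card σ).factorial * ℓ q := by
  simp only [alternation_apply, map_sum, map_zsmul, h, smul_smul, ← Units.val_mul,
    Int.units_mul_self, Units.val_one, one_smul, Finset.sum_const, Finset.card_univ,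
    Fintype.card_perm, nsmul_eq_mul]

end Alternating

section Eigenfunctional

variable {N : ℕ}

theorem vandermondePoly_eq_alternation {R : Type*} [CommRing R] :
    vandermondePoly R N = alternation (∏ i : Fin N, X i ^ (i : ℕ)) := by
  simp [vandermondePoly_eq_sum, alternation_apply]

theorem vandermonde_mul_apply_eq_alternation {F : Type*} [Field F] [CharZero F]
    {ℓ : MvPolynomial (Fin N) F →ₗ[F] F} {y : Fin N → F} (hy : Function.Injective y)
    (hpsum : ∀ k q, ℓ (psum (Fin N) F k * q) = (∑ i, y i ^ k) * ℓ q)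
    (halt : ∀ (g : Equiv.Perm (Fin N)) q, ℓ (rename g q) = (Equiv.Perm.sign g : ℤ) • ℓ q)
    (q : MvPolynomial (Fin N) F) :
    (Matrix.vandermonde y).det * ℓ q =
      eval y (alternation q) * ℓ (∏ i : Fin N, X i ^ (i : ℕ)) := by
  have hΔ : IsAlternating (vandermondePoly F N) := rename_vandermondePoly
  have hcalc := calc
    eval y (vandermondePoly F N * vandermondePoly F N) * ℓ (alternation q)
      = ℓ (alternation q * vandermondePoly F N * vandermondePoly F N) := by
        rw [← apply_symmetric_mul hpsum (hΔ.mul hΔ)]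
        ring_nf
    _ = eval y (alternation q * vandermondePoly F N) * ℓ (vandermondePoly F N) :=
        apply_symmetric_mul hpsum ((isAlternating_alternation q).mul hΔ) _
  have hy' : (Matrix.vandermonde y).det ≠ 0 := Matrix.det_vandermonde_ne_zero_iff.mpr hy
  have hfact : ((Fintype.card (Fin N)).factorial : F) ≠ 0 :=
    Nat.cast_ne_zero.mpr (Nat.factorial_ne_zero _)
  rw [apply_alternation halt, map_mul, map_mul, eval_vandermondePoly,
    vandermondePoly_eq_alternation, apply_alternation halt] at hcalc
  refine mul_left_cancel₀ (mul_ne_zero hfact hy') ?_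
  linear_combination hcalc

end Eigenfunctional

section UnitaryInvariance

variable {R n : Type*} [CommRing R] [Fintype n]

/-- The substitution `X ↦ g X h` on polynomials in the entries of a square matrix `X`. It is used
with `h` the inverse of `g`, hence its name. -/
noncomputable def conjHom (g h : Matrix n n R) :
    MvPolynomial (n × n) R →ₐ[R] MvPolynomial (n × n) R :=
  aeval fun p => ∑ k, ∑ l, (g p.1 k * h l p.2) • X (k, l)

theorem conjHom_X (g h : Matrix n n R) (i j : n) :
    conjHom g h (X (i, j)) = ∑ k, ∑ l, (g i k * h l j) • X (k, l) :=
  aeval_X _ _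

theorem eval_conjHom (g h M : Matrix n n R) (Q : MvPolynomial (n × n) R) :
    eval (fun p => M p.1 p.2) (conjHom g h Q) = eval (fun p => (g * M * h) p.1 p.2) Q := by
  suffices (aeval fun p => M p.1 p.2 : MvPolynomial (n × n) R →ₐ[R] R).comp (conjHom g h) =
      aeval fun p => (g * M * h) p.1 p.2 by
    exact DFunLike.congr_fun this Q
  refine algHom_ext fun ⟨i, j⟩ => ?_
  rw [AlgHom.comp_apply, conjHom_X, aeval_X]
  simp only [map_sum, map_smul, aeval_X, Matrix.mul_apply, Finset.sum_mul, smul_eq_mul]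
  rw [Finset.sum_comm]
  exact Finset.sum_congr rfl fun l _ => Finset.sum_congr rfl fun k _ => by ring

variable [DecidableEq n]

theorem conjHom_one_one : conjHom (1 : Matrix n n R) 1 = AlgHom.id R _ :=
  algHom_ext fun ⟨i, j⟩ => by simp [conjHom_X, Matrix.one_apply]

theorem hasDerivAt_conjHom {g h : ℝ → Matrix n n ℂ} {K : Matrix n n ℂ} (hg₀ : g 0 = 1)
    (hh₀ : h 0 = 1) (hg : ∀ i j, HasDerivAt (fun t => g t i j) (K i j) 0)
    (hh : ∀ i j, HasDerivAt (fun t => h t i j) (-K i j) 0) (Q : MvPolynomial (n × n) ℂ)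
    (φ : MvPolynomial (n × n) ℂ →ₗ[ℂ] ℂ) :
    HasDerivAt (fun t => φ (conjHom (g t) (h t) Q)) (φ (conjDeriv K Q)) 0 := by
  induction Q using MvPolynomial.induction_on generalizing φ with
  | C a => simpa [conjHom] using hasDerivAt_const (0 : ℝ) (φ (C a))
  | add p q hp hq => simpa only [map_add] using (hp φ).fun_add (hq φ)
  | mul_X p ij hp =>
    obtain ⟨i, j⟩ := ij
    simp only [map_mul, conjHom_X, Finset.mul_sum, map_sum, mul_smul_comm, map_smul, smul_eq_mul]
    refine (HasDerivAt.fun_sum fun k _ => HasDerivAt.fun_sum fun l _ => ((hg i k).mul (hh l j)).mul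
      (hp (φ ∘ₗ LinearMap.mulRight ℂ (X (k, l))))).congr_deriv ?_
    simp [hg₀, hh₀, conjHom_one_one, conjDeriv_X, Matrix.one_apply, add_mul, mul_add,
      Finset.sum_add_distrib, mul_comm (X _), sub_eq_add_neg, Finset.mul_sum]

theorem exists_curve_unitaryGroup {K : Matrix n n ℂ} (hK : star K = -K) :
    ∃ g : ℝ → Matrix.unitaryGroup n ℂ, g 0 = 1 ∧
      ∀ i j, HasDerivAt (fun t => (g t : Matrix n n ℂ) i j) (K i j) 0 := by
  have hcont : ContinuousStar (Matrix n n ℂ) := inferInstance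
  let : NormedRing (Matrix n n ℂ) := Matrix.linftyOpNormedRing
  let : NormedAlgebra ℝ (Matrix n n ℂ) := Matrix.linftyOpNormedAlgebra
  let : NormedAlgebra ℂ (Matrix n n ℂ) := Matrix.linftyOpNormedAlgebra
  let : NormedAlgebra ℚ (Matrix n n ℂ) := NormedAlgebra.restrictScalars ℚ ℝ _
  have hskew : ∀ t : ℝ, t • K ∈ skewAdjoint (Matrix n n ℂ) := fun t => by
    simp [skewAdjoint.mem_iff, hK]
  refine ⟨fun t => ⟨NormedSpace.exp (t • K),
    @NormedSpace.exp_mem_unitary_of_mem_skewAdjoint _ _ _ _ _ hcont _ (hskew t)⟩, ?_, fun i j => ?_⟩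
  · ext1
    simp
  · have hexp := hasDerivAt_exp_smul_const (𝕂 := ℝ) K 0
    rw [zero_smul, NormedSpace.exp_zero, one_mul] at hexp
    exact (Matrix.entryLinearMap ℝ ℂ i j).toContinuousLinearMap.hasFDerivAt.comp_hasDerivAt
      (0 : ℝ) hexp

/-- A functional on polynomials in the entries of a matrix is unitarily invariant if it is invariant
under the substitutions `X ↦ g X g⋆` with `g` unitary. -/
def IsUnitarilyInvariant (φ : MvPolynomial (n × n) ℂ →ₗ[ℂ] ℂ) : Prop :=
  ∀ g ∈ Matrix.unitaryGroup n ℂ, ∀ Q, φ (conjHom g (star g) Q) = φ Q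

variable {φ : MvPolynomial (n × n) ℂ →ₗ[ℂ] ℂ}

theorem IsUnitarilyInvariant.apply_conjDeriv_of_star_eq_neg (hφ : IsUnitarilyInvariant φ)
    {K : Matrix n n ℂ} (hK : star K = -K) (Q : MvPolynomial (n × n) ℂ) : φ (conjDeriv K Q) = 0 := by
  obtain ⟨g, hg₀, hg⟩ := exists_curve_unitaryGroup hK
  have hstar : ∀ i j, HasDerivAt (fun t => star (g t : Matrix n n ℂ) i j) (-K i j) 0 :=
    fun i j => by
      rw [← Matrix.neg_apply, ← hK]
      exact (hg j i).star
  have hderiv := hasDerivAt_conjHom (g := fun t => g t) (by simp [hg₀]) (by simp [hg₀]) hg hstar Q φ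
  simp only [hφ _ (g _).2] at hderiv
  exact hderiv.unique (hasDerivAt_const _ _)

theorem IsUnitarilyInvariant.isConjInvariant (hφ : IsUnitarilyInvariant φ) : IsConjInvariant φ := by
  intro K Q
  have hK : K ∈ Submodule.span ℂ (selfAdjoint (Matrix n n ℂ) : Set (Matrix n n ℂ)) := by
    rw [span_selfAdjoint]
    exact Submodule.mem_top
  induction hK using Submodule.span_induction with
  | mem H hH =>
    have hskew : star (Complex.I • H) = -(Complex.I • H) := by
      rw [star_smul, selfAdjoint.mem_iff.mp hH]
      simp
    have h := hφ.apply_conjDeriv_of_star_eq_neg hskew Q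
    simpa using h
  | zero => simp
  | add H H' _ _ hH hH' => simp [hH, hH']
  | smul a H _ hH => simp [hH]

end UnitaryInvariance

section Permutations

variable {N : ℕ} {φ : MvPolynomial (Fin N × Fin N) ℂ →ₗ[ℂ] ℂ}

theorem conjHom_permMatrix_diagEmb {R : Type*} [CommRing R] (σ : Equiv.Perm (Fin N))
    (r : MvPolynomial (Fin N) R) :
    conjHom (σ.permMatrix R) (σ⁻¹.permMatrix R) (diagEmb r) = diagEmb (rename σ r) := by
  rw [← AlgHom.comp_apply, ← AlgHom.comp_apply]
  refine DFunLike.congr_fun (algHom_ext fun i => ?_) r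
  simp [conjHom_X, PEquiv.toMatrix_apply, Equiv.symm_apply_eq]

theorem IsUnitarilyInvariant.apply_radialMap_rename (hφ : IsUnitarilyInvariant φ)
    (σ : Equiv.Perm (Fin N)) (q : MvPolynomial (Fin N) ℂ) :
    φ (radialMap (rename σ q)) = (Equiv.Perm.sign σ : ℤ) • φ (radialMap q) := by
  have hstar : star (σ.permMatrix ℂ) = σ⁻¹.permMatrix ℂ := Matrix.conjTranspose_permMatrix σ
  have hunitary : σ.permMatrix ℂ ∈ Matrix.unitaryGroup (Fin N) ℂ := by
    rw [Matrix.mem_unitaryGroup_iff, hstar, ← Matrix.permMatrix_mul, inv_mul_cancel,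
      Matrix.permMatrix_one]
  have hdiffOp : diffOp (vandermondePoly ℂ N) (rename σ q) =
      (Equiv.Perm.sign σ : ℤ) • rename σ (diffOp (vandermondePoly ℂ N) q) := by
    rw [rename_diffOp σ.injective, rename_vandermondePoly, map_zsmul, LinearMap.smul_apply,
      smul_smul, ← Units.val_mul, Int.units_mul_self, Units.val_one, one_smul]
  rw [radialMap_apply, radialMap_apply, hdiffOp, map_zsmul, map_zsmul,
    ← conjHom_permMatrix_diagEmb, ← hstar, hφ _ hunitary]

end Permutations

section UnitaryAverage

variable {n : Type*} [Fintype n] [DecidableEq n]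

instance compactSpace_unitaryGroup : CompactSpace (Matrix.unitaryGroup n ℂ) := by
  have hbox : IsCompact (Set.univ.pi fun _ : n => Set.univ.pi fun _ : n =>
      Metric.closedBall (0 : ℂ) 1) :=
    isCompact_univ_pi fun _ => isCompact_univ_pi fun _ => isCompact_closedBall _ _
  have hclosed : IsClosed (Matrix.unitaryGroup n ℂ : Set (Matrix n n ℂ)) := isClosed_unitary
  exact isCompact_iff_compactSpace.mp (hbox.of_isClosed_subset hclosed fun U hU i _ j _ =>
    mem_closedBall_zero_iff.mpr (entry_norm_bound_of_unitary hU i j))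

instance borelSpace_matrix {m n α : Type*} [TopologicalSpace α] : BorelSpace (Matrix m n α) :=
  ⟨rfl⟩

variable {m : Measure (Matrix.unitaryGroup n ℂ)}

theorem integrable_unitaryGroup [IsFiniteMeasureOnCompacts m] {f : Matrix.unitaryGroup n ℂ → ℂ}
    (hf : Continuous f) : Integrable f m :=
  hf.integrable_of_hasCompactSupport (HasCompactSupport.of_compactSpace f)

theorem continuous_unitary_conj (Y : Matrix n n ℂ) :
    Continuous fun U : Matrix.unitaryGroup n ℂ => (U * Y * star U : Matrix n n ℂ) := by
  fun_prop

theorem continuous_eval_unitary_conj (Y : Matrix n n ℂ) (Q : MvPolynomial (n × n) ℂ) :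
    Continuous fun U : Matrix.unitaryGroup n ℂ =>
      eval (fun p => (U * Y * star U : Matrix n n ℂ) p.1 p.2) Q :=
  (continuous_eval Q).comp
    (continuous_pi fun p => (continuous_unitary_conj Y).matrix_elem p.1 p.2)

/-- The functional averaging a polynomial in the entries of a matrix over the unitary orbit
`{U Y U⋆}` of `Y`. -/
noncomputable def unitaryAverage (m : Measure (Matrix.unitaryGroup n ℂ))
    [IsFiniteMeasureOnCompacts m] (Y : Matrix n n ℂ) : MvPolynomial (n × n) ℂ →ₗ[ℂ] ℂ where
  toFun Q := ∫ U, eval (fun p => (U * Y * star U : Matrix n n ℂ) p.1 p.2) Q ∂m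
  map_add' P Q := by
    simp only [map_add]
    exact integral_add (integrable_unitaryGroup (continuous_eval_unitary_conj Y P))
      (integrable_unitaryGroup (continuous_eval_unitary_conj Y Q))
  map_smul' a Q := by
    simp only [smul_eval, RingHom.id_apply, smul_eq_mul]
    exact integral_const_mul a _

theorem unitaryAverage_apply [IsFiniteMeasureOnCompacts m] (Y : Matrix n n ℂ)
    (Q : MvPolynomial (n × n) ℂ) : unitaryAverage m Y Q =
      ∫ U, eval (fun p => (U * Y * star U : Matrix n n ℂ) p.1 p.2) Q ∂m :=
  rfl

theorem isUnitarilyInvariant_unitaryAverage [IsFiniteMeasureOnCompacts m] [m.IsMulLeftInvariant]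
    (Y : Matrix n n ℂ) : IsUnitarilyInvariant (unitaryAverage m Y) := by
  intro g hg Q
  refine Eq.trans ?_ (integral_mul_left_eq_self _ ⟨g, hg⟩)
  simp [unitaryAverage_apply, eval_conjHom, mul_assoc]

theorem trace_unitary_conj_pow (U : Matrix.unitaryGroup n ℂ) (Y : Matrix n n ℂ) (k : ℕ) :
    ((U * Y * star U : Matrix n n ℂ) ^ k).trace = (Y ^ k).trace := by
  have h := Units.conj_pow (Unitary.toUnits U) Y k
  exact (congrArg Matrix.trace h).trans (Matrix.trace_units_conj _ _)

theorem eval_trace_mvPolynomialX_pow {R : Type*} [CommRing R] (M : Matrix n n R) (k : ℕ) :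
    eval (fun p => M p.1 p.2) (Matrix.mvPolynomialX n n R ^ k).trace = (M ^ k).trace := by
  rw [AddMonoidHom.map_trace, ← RingHom.mapMatrix_apply, map_pow,
    Matrix.mvPolynomialX_mapMatrix_eval]

theorem unitaryAverage_trace_pow_mul [IsFiniteMeasureOnCompacts m] (Y : Matrix n n ℂ) (k : ℕ)
    (Q : MvPolynomial (n × n) ℂ) :
    unitaryAverage m Y ((Matrix.mvPolynomialX n n ℂ ^ k).trace * Q) =
      (Y ^ k).trace * unitaryAverage m Y Q := by
  simp only [unitaryAverage_apply, map_mul, eval_trace_mvPolynomialX_pow, trace_unitary_conj_pow,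
    integral_const_mul]

theorem vandermonde_mul_unitaryAverage_radialMap {N : ℕ}
    {m : Measure (Matrix.unitaryGroup (Fin N) ℂ)} [IsProbabilityMeasure m] [m.IsMulLeftInvariant]
    {y : Fin N → ℂ} (hy : Function.Injective y) (q : MvPolynomial (Fin N) ℂ) :
    (Matrix.vandermonde y).det * unitaryAverage m (Matrix.diagonal y) (radialMap q) =
      eval y (alternation q) * ∏ i : Fin N, ((i : ℕ).factorial : ℂ) := by
  have hφ := isUnitarilyInvariant_unitaryAverage (m := m) (Matrix.diagonal y)
  have hstaircase : unitaryAverage m (Matrix.diagonal y) (radialMap (∏ i : Fin N, X i ^ (i : ℕ))) =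
      ∏ i : Fin N, ((i : ℕ).factorial : ℂ) := by
    simp [radialMap_apply, diffOp_vandermondePoly_staircase, unitaryAverage_apply]
  rw [← hstaircase]
  refine vandermonde_mul_apply_eq_alternation
    (ℓ := unitaryAverage m (Matrix.diagonal y) ∘ₗ radialMap) hy (fun k q => ?_)
    hφ.apply_radialMap_rename q
  rw [LinearMap.comp_apply, LinearMap.comp_apply,
    ← hφ.isConjInvariant.apply_trace_pow_mul_radialMap, unitaryAverage_trace_pow_mul,
    Matrix.diagonal_pow, Matrix.trace_diagonal]
  rfl

end UnitaryAverage

section Exponential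

variable {σ F : Type*} [Fintype σ] [Field F]

/-- The term of degree `k` of the power series `exp (∑ i, x i * X i)`. -/
noncomputable def expTerm (x : σ → F) (k : ℕ) : MvPolynomial σ F :=
  (k.factorial : F)⁻¹ • (∑ i, x i • X i) ^ k

theorem eval_expTerm (x z : σ → F) (k : ℕ) :
    eval z (expTerm x k) = (∑ i, x i * z i) ^ k / k.factorial := by
  simp [expTerm, div_eq_inv_mul]

theorem pderiv_expTerm_zero (x : σ → F) (i : σ) : pderiv i (expTerm x 0) = 0 := by
  simp [expTerm]

theorem pderiv_expTerm_succ [CharZero F] (x : σ → F) (i : σ) (k : ℕ) :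
    pderiv i (expTerm x (k + 1)) = x i • expTerm x k := by
  classical
  have hlinear : pderiv i (∑ j, x j • X j : MvPolynomial σ F) = C (x i) := by
    simp [pderiv_X, Pi.single_apply, smul_eq_C_mul]
  have hk : (k + 1 : F) ≠ 0 := Nat.cast_add_one_ne_zero k
  rw [expTerm, expTerm, Derivation.map_smul, Derivation.leibniz_pow, hlinear, smul_comm (x i),
    Nat.factorial_succ, Nat.add_sub_cancel, smul_eq_mul, ← Nat.cast_smul_eq_nsmul F, smul_smul,
    mul_comm (_ ^ k), smul_eq_C_mul (_ ^ k)]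
  congr 1
  push_cast
  field_simp

theorem hasSum_apply_diffOp_expTerm {x : σ → ℂ} {ψ : MvPolynomial σ ℂ →ₗ[ℂ] ℂ} {S : ℂ}
    (h : HasSum (fun k => ψ (expTerm x k)) S) (P : MvPolynomial σ ℂ) :
    HasSum (fun k => ψ (diffOp P (expTerm x k))) (eval x P * S) := by
  induction P using MvPolynomial.induction_on with
  | C a => simpa using h.mul_left a
  | add P Q hP hQ => simpa [add_mul] using hP.add hQ
  | mul_X P i hP =>
    rw [← hasSum_nat_add_iff' 1]
    simpa [diffOp_mul_X_apply, pderiv_expTerm_zero, pderiv_expTerm_succ, mul_assoc,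
      mul_left_comm] using hP.mul_left (x i)

theorem hasSum_eval_expTerm (x z : σ → ℂ) :
    HasSum (fun k => eval z (expTerm x k)) (Complex.exp (∑ i, x i * z i)) := by
  simp only [eval_expTerm, Complex.exp_eq_exp_ℂ]
  exact NormedSpace.expSeries_div_hasSum_exp _

theorem hasSum_eval_alternation_expTerm [DecidableEq σ] (x y : σ → ℂ) :
    HasSum (fun k => eval y (alternation (expTerm x k)))
      (Matrix.of fun i j => Complex.exp (y i * x j)).det := by
  simp only [alternation_apply, map_sum, map_zsmul, eval_rename, Matrix.det_apply, Matrix.of_apply,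
    ← Complex.exp_sum]
  refine hasSum_sum fun g _ => ?_
  simpa [mul_comm, Units.smul_def] using
    (hasSum_eval_expTerm x (y ∘ g)).const_smul (Equiv.Perm.sign g)

theorem hasSum_integral_pow_div_factorial {α : Type*} [MeasurableSpace α] {μ : Measure α}
    {f : α → ℂ} (hf : AEStronglyMeasurable f μ) (hexp : Integrable (fun a => Real.exp ‖f a‖) μ) :
    HasSum (fun k : ℕ => ∫ a, f a ^ k / k.factorial ∂μ) (∫ a, Complex.exp (f a) ∂μ) := by
  have hsum : ∀ a, HasSum (fun k : ℕ => ‖f a‖ ^ k / k.factorial) (Real.exp ‖f a‖) := fun a => by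
    rw [Real.exp_eq_exp_ℝ]
    exact NormedSpace.expSeries_div_hasSum_exp _
  refine hasSum_integral_of_dominated_convergence (fun k a => ‖f a‖ ^ k / k.factorial)
    (fun k => AEStronglyMeasurable.mul_const (hf.pow k) _) (fun k => ?_) ?_ ?_ ?_
  · exact Filter.Eventually.of_forall fun a => by simp
  · exact Filter.Eventually.of_forall fun a => (hsum a).summable
  · simpa only [(hsum _).tsum_eq] using hexp
  · refine Filter.Eventually.of_forall fun a => ?_
    rw [Complex.exp_eq_exp_ℂ]
    exact NormedSpace.expSeries_div_hasSum_exp _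

variable {N : ℕ} {m : Measure (Matrix.unitaryGroup (Fin N) ℂ)}

theorem hasSum_unitaryAverage_diagEmb_expTerm [IsFiniteMeasureOnCompacts m]
    (Y : Matrix (Fin N) (Fin N) ℂ) (x : Fin N → ℂ) :
    HasSum (fun k => unitaryAverage m Y (diagEmb (expTerm x k)))
      (∫ U, Complex.exp
        (U * Y * star U * Matrix.diagonal x : Matrix (Fin N) (Fin N) ℂ).trace ∂m) := by
  have hcont : Continuous fun U : Matrix.unitaryGroup (Fin N) ℂ =>
      (U * Y * star U * Matrix.diagonal x : Matrix (Fin N) (Fin N) ℂ).trace := by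
    fun_prop
  convert hasSum_integral_pow_div_factorial (μ := m) hcont.aestronglyMeasurable
    ((Real.continuous_exp.comp hcont.norm).integrable_of_hasCompactSupport
      (HasCompactSupport.of_compactSpace _)) using 3 with k
  refine integral_congr_ae (Filter.Eventually.of_forall fun U => ?_)
  simp [eval_rename, eval_expTerm, Matrix.trace, Matrix.mul_diagonal, mul_comm]

theorem vandermonde_mul_integral_exp_trace [IsProbabilityMeasure m] [m.IsMulLeftInvariant]
    {y : Fin N → ℂ} (hy : Function.Injective y) (x : Fin N → ℂ) :
    (Matrix.vandermonde y).det * ((Matrix.vandermonde x).det * ∫ U, Complex.exp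
        (U * Matrix.diagonal y * star U * Matrix.diagonal x : Matrix (Fin N) (Fin N) ℂ).trace ∂m) =
      (Matrix.of fun i j => Complex.exp (y i * x j)).det *
        ∏ i : Fin N, ((i : ℕ).factorial : ℂ) := by
  have hleft := (hasSum_apply_diffOp_expTerm
    (ψ := unitaryAverage m (Matrix.diagonal y) ∘ₗ (diagEmb (N := N)).toLinearMap)
    (hasSum_unitaryAverage_diagEmb_expTerm (Matrix.diagonal y) x) (vandermondePoly ℂ N)).mul_left
    (Matrix.vandermonde y).det
  have hright := (hasSum_eval_alternation_expTerm x y).mul_right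
    (∏ i : Fin N, ((i : ℕ).factorial : ℂ))
  rw [eval_vandermondePoly] at hleft
  simp only [← vandermonde_mul_unitaryAverage_radialMap (m := m) hy] at hright
  exact hleft.unique hright

end Exponential

section RealForm

variable {n : Type*} [Fintype n]

theorem ofReal_re_trace_mul {A B : Matrix n n ℂ} (hA : A.IsHermitian) (hB : B.IsHermitian) :
    ((A * B).trace.re : ℂ) = (A * B).trace := by
  rw [← Complex.conj_eq_iff_re, starRingEnd_apply, ← Matrix.trace_conjTranspose,
    Matrix.conjTranspose_mul, hA.eq, hB.eq, Matrix.trace_mul_comm]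

theorem ofReal_re_trace_mul_diagonal [DecidableEq n] (U : Matrix n n ℂ) (c d : n → ℝ) :
    ((U * Matrix.diagonal (fun i => (c i : ℂ)) * star U *
      Matrix.diagonal (fun i => (d i : ℂ))).trace.re : ℂ) =
      (U * Matrix.diagonal (fun i => (c i : ℂ)) * star U *
        Matrix.diagonal (fun i => (d i : ℂ))).trace := by
  have hreal : ∀ x : n → ℝ, (Matrix.diagonal fun i => (x i : ℂ)).IsHermitian := fun x =>
    Matrix.isHermitian_diagonal_of_self_adjoint _ (funext fun i => Complex.conj_ofReal (x i))
  exact ofReal_re_trace_mul (Matrix.isHermitian_mul_mul_conjTranspose U (hreal c)) (hreal d)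

theorem ofReal_det_of [DecidableEq n] (M : n → n → ℝ) :
    ((Matrix.of M).det : ℂ) = (Matrix.of fun i j => (M i j : ℂ)).det :=
  RingHom.map_det Complex.ofRealHom (Matrix.of M)

end RealForm

end HCIZ

theorem harish_chandra_itzykson_zuber_general (N : ℕ) (m : Measure (Matrix.unitaryGroup (Fin N) ℂ))
    [m.IsMulLeftInvariant] [IsProbabilityMeasure m] :
    ∃ cN : ℝ, 0 < cN ∧ ∀ c d : Fin N → ℂ, Function.Injective c → Function.Injective d →
      (∫ U, Complex.exp (N * (Matrix.trace ((U : Matrix (Fin N) (Fin N) ℂ) *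
            Matrix.diagonal c * star (U : Matrix (Fin N) (Fin N) ℂ) * Matrix.diagonal d))) ∂m)
        = cN * Matrix.det (Matrix.of fun i j : Fin N => Complex.exp (N * c i * d j))
          / ((∏ i : Fin N, ∏ j ∈ Finset.Ioi i, (c i - c j)) *
             (∏ i : Fin N, ∏ j ∈ Finset.Ioi i, (d i - d j))) := by
  have hpow : 0 < ∏ i : Fin N, ∏ _j ∈ Finset.Ioi i, (N : ℝ) :=
    Finset.prod_pos fun i _ => Finset.prod_pos fun _ _ => Nat.cast_pos.mpr i.pos
  refine ⟨(∏ i : Fin N, ((i : ℕ).factorial : ℝ)) / ∏ i : Fin N, ∏ _j ∈ Finset.Ioi i, (N : ℝ),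
    div_pos (Finset.prod_pos fun i _ => Nat.cast_pos.mpr (Nat.factorial_pos _)) hpow,
    fun c d hc hd => ?_⟩
  have hpow' : ∏ i : Fin N, ∏ _j ∈ Finset.Ioi i, (N : ℂ) ≠ 0 := mod_cast hpow.ne'
  have hcd : (Matrix.vandermonde c).det * (Matrix.vandermonde d).det ≠ 0 :=
    mul_ne_zero (Matrix.det_vandermonde_ne_zero_iff.mpr hc)
      (Matrix.det_vandermonde_ne_zero_iff.mpr hd)
  have h := HCIZ.vandermonde_mul_integral_exp_trace (m := m) hc ((N : ℂ) • d)
  simp only [HCIZ.det_vandermonde_smul, Matrix.diagonal_smul, Matrix.mul_smul, Matrix.trace_smul,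
    smul_eq_mul, Pi.smul_apply, mul_left_comm (c _), ← mul_assoc (N : ℂ)] at h
  rw [← HCIZ.det_vandermonde_mul_det_vandermonde, eq_div_iff hcd]
  push_cast
  field_simp
  linear_combination h

/-- **Harish-Chandra–Itzykson–Zuber formula.** For every `N` there is a constant `c_N > 0`
such that for all real diagonal matrices `C = diag c`, `D = diag d` with pairwise distinct
diagonal entries,
`∫_{U(N)} exp (N tr (U C U⋆ D)) dm_N(U)
  = c_N · det (exp (N c_i d_j)) / (∏_{i<j} (c_i - c_j) · ∏_{i<j} (d_i - d_j))`,
where `m_N` is the Haar probability measure on the unitary group. -/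
theorem harish_chandra_itzykson_zuber (N : ℕ) (hN : 0 < N)
    (m : Measure (Matrix.unitaryGroup (Fin N) ℂ))
    [m.IsHaarMeasure] [IsProbabilityMeasure m] :
    ∃ cN : ℝ, 0 < cN ∧ ∀ c d : Fin N → ℝ, Function.Injective c → Function.Injective d →
      (∫ U, Real.exp ((N : ℝ) * (Matrix.trace ((U : Matrix (Fin N) (Fin N) ℂ) *
            Matrix.diagonal (fun i => (c i : ℂ)) * star (U : Matrix (Fin N) (Fin N) ℂ) *
            Matrix.diagonal (fun i => (d i : ℂ)))).re) ∂m)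
        = cN * Matrix.det (Matrix.of fun i j : Fin N => Real.exp ((N : ℝ) * c i * d j))
          / ((∏ i : Fin N, ∏ j ∈ Finset.Ioi i, (c i - c j)) *
             (∏ i : Fin N, ∏ j ∈ Finset.Ioi i, (d i - d j))) := by
  obtain ⟨cN, hcN, h⟩ := harish_chandra_itzykson_zuber_general N m
  refine ⟨cN, hcN, fun c d hc hd => Complex.ofReal_injective ?_⟩
  simpa [Function.comp_def, ← integral_complex_ofReal, HCIZ.ofReal_det_of,
    HCIZ.ofReal_re_trace_mul_diagonal] using
    h _ _ (Complex.ofReal_injective.comp hc) (Complex.ofReal_injective.comp hd)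
end
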